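/- Let c ∈ (0,1), assume k_c > 0 satisfies a(k_c) = c, m'(k_c) ≠ 0, and m(k) ≠ 0 for all real k ∉ {−k_c, k_c}, let (Ψ_δ)_{δ>0} satisfy Assumption A with constant C_Ψ and I_δ = 0 for all δ > 0, and let R₀ be an unperturbed wave. Then there exist constants C₀, C₁, C₂ > 0 and δ₀ > 0 such that for every 0 < δ < δ₀ there is exactly one S ∈ X with ‖S‖_∞ ≤ C₀δ², ‖S'‖_∞ ≤ C₁δ, and ‖S''‖_∞ ≤ C₂ for which there exists η ∈ ℝ with M S = A² G(S) + η; moreover, this unique S is δ-admissible. -/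

import Mathlib

open MeasureTheory Real Filter Topology

/-- The averaging operator `(A F)(x) = ∫_{x-1/2}^{x+1/2} F(s) ds`. -/
noncomputable def Aop (F : ℝ → ℝ) : ℝ → ℝ := fun x => ∫ s in (x - 1/2)..(x + 1/2), F s

/-- The operator `M F = A(A F) - c² F`. -/
noncomputable def Mop (c : ℝ) (F : ℝ → ℝ) : ℝ → ℝ := fun x => Aop (Aop F) x - c ^ 2 * F x

/-- Membership in `W^{2,∞}(ℝ)`. -/
def IsW2inf (S : ℝ → ℝ) : Prop :=
  Differentiable ℝ S ∧ (∃ C : ℝ, ∀ x, |S x| ≤ C ∧ |deriv S x| ≤ C) ∧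
    ∃ K : NNReal, LipschitzWith K (deriv S)

/-- Assumption A for the family `(Ψ_δ)_{δ>0}` with constant `C_Ψ`. -/
def AssumptionA (Ψ : ℝ → ℝ → ℝ) (CΨ : ℝ) : Prop :=
  0 < CΨ ∧ ∀ δ : ℝ, 0 < δ →
    Ψ δ 0 = 0 ∧ ContDiff ℝ 2 (Ψ δ) ∧
    (∀ r : ℝ, δ ≤ |r| → deriv (Ψ δ) r = Real.sign r) ∧
    (∀ r : ℝ, |deriv (Ψ δ) r| ≤ CΨ) ∧
    (∀ r : ℝ, |deriv (deriv (Ψ δ)) r| ≤ CΨ / δ)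

/-- The quantity `I_δ = ½ ∫_ℝ (Ψ'_δ(r) − sgn r) dr`. -/
noncomputable def Idelta (Ψ : ℝ → ℝ → ℝ) (δ : ℝ) : ℝ :=
  (1 / 2) * ∫ r : ℝ, (deriv (Ψ δ) r - Real.sign r)

/-- An unperturbed wave `R₀`: a `W^{2,∞}` solution of `M R₀ = A²(sgn ∘ R₀) + μ₀` with
`R₀(0) = 0` which leaves a neighbourhood of `0` monotonically and stays away from `0`. -/
def UnperturbedWave (c : ℝ) (R₀ : ℝ → ℝ) : Prop :=
  IsW2inf R₀ ∧ R₀ 0 = 0 ∧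
  (∃ μ₀ : ℝ, ∀ x, Mop c R₀ x = Aop (Aop (fun y => Real.sign (R₀ y))) x + μ₀) ∧
  ∃ x₀ r₀ d₀ : ℝ, 0 < x₀ ∧ 0 < r₀ ∧ 0 < d₀ ∧
    (∀ x, x₀ < x → r₀ < R₀ x) ∧ (∀ x, x < -x₀ → R₀ x < -r₀) ∧
    (∀ x, |x| < x₀ → d₀ < deriv R₀ x)

/-- `δ`-admissibility of a corrector `S` relative to `R₀`. -/
def Admissible (δ : ℝ) (R₀ S : ℝ → ℝ) : Prop :=
  IsW2inf S ∧ S 0 = 0 ∧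
  ∃ xm xp : ℝ, xm < 0 ∧ 0 < xp ∧
    R₀ xm + S xm = -δ ∧ R₀ xp + S xp = δ ∧
    (∀ x, x < xm → R₀ x + S x < -δ) ∧
    (∀ x, xp < x → δ < R₀ x + S x) ∧
    (∀ x, xm < x → x < xp →
      deriv R₀ 0 / 2 < deriv R₀ x + deriv S x ∧ deriv R₀ x + deriv S x < 2 * deriv R₀ 0)

/-- The nonlinear superposition operator `G(S)(x) = Ψ'_δ(R₀(x)+S(x)) − sgn(R₀(x))`. -/
noncomputable def Gop (Ψ : ℝ → ℝ → ℝ) (δ : ℝ) (R₀ S : ℝ → ℝ) : ℝ → ℝ :=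
  fun x => deriv (Ψ δ) (R₀ x + S x) - Real.sign (R₀ x)

/-- The symbol `a(k) = sin(k/2)/(k/2)`, with `a(0) = 1`. -/
noncomputable def symb (k : ℝ) : ℝ := if k = 0 then 1 else Real.sin (k / 2) / (k / 2)

/-- The symbol `m(k) = a(k)² - c²`. -/
noncomputable def msymb (c : ℝ) : ℝ → ℝ := fun k => (symb k) ^ 2 - c ^ 2

/-- The space `X` of `S ∈ W^{2,∞}(ℝ)` with `S(0) = 0` such that `lim_{x→+∞} S(x)` exists. -/
def IsX (S : ℝ → ℝ) : Prop := IsW2inf S ∧ S 0 = 0 ∧ ∃ l : ℝ, Tendsto S atTop (nhds l)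

/-! ### Section 1: the averaging operator -/

theorem Aop_eq (F : ℝ → ℝ) (x : ℝ) : Aop F x = ∫ t in (-1/2:ℝ)..(1/2), F (x + t) := by
  unfold Aop
  rw [intervalIntegral.integral_comp_add_left]
  congr 1
  ring

theorem bm_ii {F : ℝ → ℝ} {B : ℝ} (hF : Measurable F) (hB : ∀ x, |F x| ≤ B) (a b : ℝ) :
    IntervalIntegrable F volume a b := by
  rw [intervalIntegrable_iff]
  refine Measure.integrableOn_of_bounded (M := B) ?_ hF.aestronglyMeasurable ?_
  · rw [Set.uIoc]; simp
  · exact Eventually.of_forall (fun x => hB x)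

theorem Aop_bound {F : ℝ → ℝ} {B : ℝ} (hB : ∀ x, |F x| ≤ B) (x : ℝ) : |Aop F x| ≤ B := by
  unfold Aop
  have := intervalIntegral.norm_integral_le_of_norm_le_const (a := x - 1/2) (b := x + 1/2)
    (f := F) (C := B) (fun y _ => hB y)
  rw [Real.norm_eq_abs] at this
  have h2 : |x + 1/2 - (x - 1/2)| = 1 := by norm_num
  rw [h2] at this
  linarith

theorem Aop_sub_eq {F : ℝ → ℝ} {B : ℝ} (hF : Measurable F) (hB : ∀ x, |F x| ≤ B) (x y : ℝ) :
    Aop F x - Aop F y = (∫ s in (y + 1/2)..(x + 1/2), F s) - ∫ s in (y - 1/2)..(x - 1/2), F s := by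
  unfold Aop
  have i := fun a b => bm_ii hF hB a b
  have h1 := intervalIntegral.integral_add_adjacent_intervals (i (x - 1/2) (x + 1/2)) (i (x + 1/2) (y + 1/2))
  have h2 := intervalIntegral.integral_add_adjacent_intervals (i (x - 1/2) (y - 1/2)) (i (y - 1/2) (y + 1/2))
  rw [intervalIntegral.integral_symm (x+1/2) (y+1/2), intervalIntegral.integral_symm (x-1/2) (y-1/2)]
  linarith

theorem Aop_lip {F : ℝ → ℝ} {B : ℝ} (hF : Measurable F) (hB : ∀ x, |F x| ≤ B) (x y : ℝ) :
    |Aop F x - Aop F y| ≤ 2 * B * |x - y| := by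
  rw [Aop_sub_eq hF hB]
  have h1 := intervalIntegral.norm_integral_le_of_norm_le_const (a := y + 1/2) (b := x + 1/2)
    (f := F) (C := B) (fun y _ => hB y)
  have h2 := intervalIntegral.norm_integral_le_of_norm_le_const (a := y - 1/2) (b := x - 1/2)
    (f := F) (C := B) (fun y _ => hB y)
  rw [Real.norm_eq_abs] at h1 h2
  have e1 : x + 1/2 - (y + 1/2) = x - y := by ring
  have e2 : x - 1/2 - (y - 1/2) = x - y := by ring
  rw [e1] at h1
  rw [e2] at h2
  refine (abs_sub _ _).trans ?_
  linarith

theorem cont_of_lip {F : ℝ → ℝ} {K : ℝ} (h : ∀ x y, |F x - F y| ≤ K * |x - y|) : Continuous F := by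
  have hK : 0 ≤ K := by
    have := h 1 0
    norm_num at this
    exact (abs_nonneg _).trans this
  have : LipschitzWith ⟨K, hK⟩ F := LipschitzWith.of_dist_le_mul (fun x y => by
    rw [Real.dist_eq, Real.dist_eq]; exact h x y)
  exact this.continuous

theorem Aop_cont {F : ℝ → ℝ} {B : ℝ} (hF : Measurable F) (hB : ∀ x, |F x| ≤ B) :
    Continuous (Aop F) := cont_of_lip (Aop_lip hF hB)

theorem Aop_hasDerivAt {F : ℝ → ℝ} (hF : Continuous F) (x : ℝ) :
    HasDerivAt (Aop F) (F (x + 1/2) - F (x - 1/2)) x := by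
  have h0 : Aop F = fun x => (∫ s in (0:ℝ)..(x + 1/2), F s) - ∫ s in (0:ℝ)..(x - 1/2), F s := by
    ext x
    unfold Aop
    rw [intervalIntegral.integral_interval_sub_left] <;> exact hF.intervalIntegrable _ _
  rw [h0]
  have h1 : ∀ y, HasDerivAt (fun x => ∫ s in (0:ℝ)..x, F s) (F y) y := fun y =>
    intervalIntegral.integral_hasDerivAt_right (hF.intervalIntegrable _ _)
      (hF.stronglyMeasurableAtFilter _ _) hF.continuousAt
  exact ((h1 (x + 1/2)).comp_add_const x (1/2)).sub ((h1 (x - 1/2)).comp_sub_const x (1/2))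

theorem Aop_of_deriv {F F' : ℝ → ℝ} (h : ∀ x, HasDerivAt F (F' x) x) (hc : Continuous F') (x : ℝ) :
    Aop F' x = F (x + 1/2) - F (x - 1/2) := by
  unfold Aop
  exact intervalIntegral.integral_eq_sub_of_hasDerivAt (fun y _ => h y) (hc.intervalIntegrable _ _)

theorem Aop_shift (F : ℝ → ℝ) (s x : ℝ) : Aop (fun y => F (y + s)) x = Aop F (x + s) := by
  rw [Aop_eq, Aop_eq]
  congr 1
  ext t
  ring_nf

theorem Aop_sub {F G : ℝ → ℝ} {B B' : ℝ} (hF : Measurable F) (hB : ∀ x, |F x| ≤ B)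
    (hG : Measurable G) (hB' : ∀ x, |G x| ≤ B') (x : ℝ) :
    Aop (fun y => F y - G y) x = Aop F x - Aop G x := by
  unfold Aop
  exact intervalIntegral.integral_sub (bm_ii hF hB _ _) (bm_ii hG hB' _ _)

theorem Aop_smul (F : ℝ → ℝ) (r x : ℝ) : Aop (fun y => r * F y) x = r * Aop F x := by
  unfold Aop
  exact intervalIntegral.integral_const_mul _ _

theorem Aop_const (r x : ℝ) : Aop (fun _ => r) x = r := by
  unfold Aop
  rw [intervalIntegral.integral_const]
  norm_num

theorem AA_sub {F G : ℝ → ℝ} {B B' : ℝ} (hF : Measurable F) (hB : ∀ x, |F x| ≤ B)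
    (hG : Measurable G) (hB' : ∀ x, |G x| ≤ B') (x : ℝ) :
    Aop (Aop (fun y => F y - G y)) x = Aop (Aop F) x - Aop (Aop G) x := by
  have : Aop (fun y => F y - G y) = fun y => Aop F y - Aop G y := by
    ext y; exact Aop_sub hF hB hG hB' y
  rw [this]
  exact Aop_sub (Aop_cont hF hB).measurable (Aop_bound hB) (Aop_cont hG hB').measurable (Aop_bound hB') x

theorem Mop_sub (c : ℝ) {F G : ℝ → ℝ} {B B' : ℝ} (hF : Measurable F) (hB : ∀ x, |F x| ≤ B)
    (hG : Measurable G) (hB' : ∀ x, |G x| ≤ B') (x : ℝ) :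
    Mop c (fun y => F y - G y) x = Mop c F x - Mop c G x := by
  unfold Mop
  rw [AA_sub hF hB hG hB']
  ring

theorem Mop_smul (c r : ℝ) (F : ℝ → ℝ) (x : ℝ) : Mop c (fun y => r * F y) x = r * Mop c F x := by
  unfold Mop
  have : Aop (fun y => r * F y) = fun y => r * Aop F y := by ext y; exact Aop_smul F r y
  rw [this, Aop_smul]
  ring

theorem Mop_const (c r x : ℝ) : Mop c (fun _ => r) x = (1 - c^2) * r := by
  unfold Mop
  have : Aop (fun _ => r) = fun _ => r := by ext y; exact Aop_const r y
  rw [this, this]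
  ring

theorem Mop_shift (c : ℝ) (F : ℝ → ℝ) (s x : ℝ) : Mop c (fun y => F (y + s)) x = Mop c F (x + s) := by
  unfold Mop
  have : Aop (fun y => F (y + s)) = fun y => Aop F (y + s) := by ext y; exact Aop_shift F s y
  rw [this, Aop_shift]

/-- averaging commutes with convolution -/
theorem Aop_conv {g G : ℝ → ℝ} {B : ℝ} (hg : Measurable g) (hB : ∀ x, |g x| ≤ B)
    (hG : Integrable G) (x : ℝ) :
    Aop (fun x => ∫ y, g (x - y) * G y) x = ∫ y, Aop g (x - y) * G y := by
  rw [Aop_eq]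
  rw [intervalIntegral_integral_swap]
  · congr 1
    ext y
    rw [intervalIntegral.integral_mul_const, Aop_eq]
    congr 2
    ext t
    ring_nf
  · have hbase : Integrable (fun p : ℝ × ℝ => (1:ℝ) * G p.2)
        ((volume.restrict (Set.uIoc (-1/2:ℝ) (1/2))).prod volume) := by
      apply Integrable.mul_prod (f := fun _ : ℝ => (1:ℝ)) (g := G) _ hG
      rw [← IntegrableOn, integrableOn_const_iff]
      right
      rw [Set.uIoc]; simp
    have hm : Measurable (fun p : ℝ × ℝ => g (x + p.1 - p.2)) := hg.comp (by fun_prop)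
    have := hbase.bdd_mul (c := B) hm.aestronglyMeasurable (Eventually.of_forall (fun p => hB _))
    refine this.congr (Eventually.of_forall (fun p => ?_))
    simp [Function.uncurry]

/-! ### Section 2: Fourier tools -/

open scoped FourierTransform ContDiff

noncomputable def Eh (h : ℝ → ℂ) (x : ℝ) : ℂ := ∫ k : ℝ, Complex.exp (Complex.I * k * x) * h k

theorem Eh_schwartz {h : ℝ → ℂ} (hc : HasCompactSupport h) (hs : ContDiff ℝ ∞ h) :
    ∃ f : SchwartzMap ℝ ℂ, (∀ x, Eh h x = f (x / (2 * π))) ∧ ∫ y, f y = h 0 := by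
  refine ⟨𝓕⁻ (hc.toSchwartzMap hs), ?_, ?_⟩
  · intro x
    rw [SchwartzMap.fourierInv_coe, Real.fourierInv_eq']
    unfold Eh
    congr 1
    ext k
    simp only [smul_eq_mul, RCLike.inner_apply, conj_trivial]
    change Complex.exp _ * h k = Complex.exp _ * h k
    congr 2
    push_cast
    have : (π : ℂ) ≠ 0 := by exact_mod_cast Real.pi_ne_zero
    field_simp
  · have h1 : 𝓕 (𝓕⁻ (hc.toSchwartzMap hs)) = hc.toSchwartzMap hs := FourierTransform.fourier_fourierInv_eq _
    have h2 : (𝓕 (𝓕⁻ (hc.toSchwartzMap hs))) 0 = h 0 := by rw [h1]; rfl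
    rw [SchwartzMap.fourier_coe, Real.fourier_real_eq] at h2
    simpa using h2

theorem Eh_integrable {h : ℝ → ℂ} (hc : HasCompactSupport h) (hs : ContDiff ℝ ∞ h) :
    Integrable (Eh h) := by
  obtain ⟨f, hf, -⟩ := Eh_schwartz hc hs
  have : Eh h = fun x => f (x / (2 * π)) := funext hf
  rw [this]
  exact f.integrable.comp_div (by positivity)

theorem Eh_integrable_abs {h : ℝ → ℂ} (hc : HasCompactSupport h) (hs : ContDiff ℝ ∞ h) :
    Integrable (fun x => |x| * ‖Eh h x‖) := by
  obtain ⟨f, hf, -⟩ := Eh_schwartz hc hs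
  have h1 := f.integrable_pow_mul volume 1
  have h2 := (h1.comp_div (R := 2 * π) (by positivity)).const_mul (2 * π)
  refine h2.congr (Eventually.of_forall (fun x => ?_))
  simp only [pow_one, hf x, Real.norm_eq_abs, abs_div]
  have : |2 * π| = 2 * π := abs_of_pos (by positivity)
  rw [this]
  field_simp

theorem Eh_continuous {h : ℝ → ℂ} (hc : HasCompactSupport h) (hs : ContDiff ℝ ∞ h) :
    Continuous (Eh h) := by
  obtain ⟨f, hf, -⟩ := Eh_schwartz hc hs
  have : Eh h = fun x => f (x / (2 * π)) := funext hf
  rw [this]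
  exact f.continuous.comp (by fun_prop)

theorem Eh_integral {h : ℝ → ℂ} (hc : HasCompactSupport h) (hs : ContDiff ℝ ∞ h) :
    ∫ x, Eh h x = 2 * π * h 0 := by
  obtain ⟨f, hf, h0⟩ := Eh_schwartz hc hs
  have : Eh h = fun x => f (x / (2 * π)) := funext hf
  rw [this, Measure.integral_comp_div (fun x => f x), h0, abs_of_pos (by positivity)]
  simp

theorem Eh_int {h : ℝ → ℂ} (hc : HasCompactSupport h) (hs : ContDiff ℝ ∞ h) (x : ℝ) :
    Integrable (fun k : ℝ => Complex.exp (Complex.I * k * x) * h k) :=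
  Continuous.integrable_of_hasCompactSupport (by have := hs.continuous; fun_prop) hc.mul_left

theorem Eh_scale (h : ℝ → ℂ) {R : ℝ} (hR : 0 < R) (x : ℝ) :
    Eh (fun k => h (k / R)) x = R * Eh h (R * x) := by
  unfold Eh
  have := Measure.integral_comp_div (fun k : ℝ => Complex.exp (Complex.I * k * (R * x : ℝ)) * h k) R
  rw [abs_of_pos hR] at this
  rw [← Complex.real_smul, ← this]
  congr 1
  ext k
  congr 2
  push_cast
  have : (R : ℂ) ≠ 0 := by exact_mod_cast hR.ne'
  field_simp

/-- entire symbol -/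
noncomputable def aC (z : ℂ) : ℂ := dslope Complex.sin 0 (z / 2)

theorem dslope_entire {f : ℂ → ℂ} (hf : Differentiable ℂ f) (a : ℂ) : Differentiable ℂ (dslope f a) := by
  rw [← differentiableOn_univ] at *
  exact (Complex.differentiableOn_dslope Filter.univ_mem).2 hf

theorem aC_entire : Differentiable ℂ aC :=
  (dslope_entire Complex.differentiable_sin 0).comp (by fun_prop)

theorem aC_ne {z : ℂ} (hz : z ≠ 0) : aC z = Complex.sin (z / 2) / (z / 2) := by
  unfold aC
  rw [dslope_of_ne _ (by simpa using hz), slope_def_field]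
  simp

theorem aC_zero : aC 0 = 1 := by
  unfold aC
  simp [dslope_same]

theorem aC_real (k : ℝ) : aC k = (symb k : ℂ) := by
  unfold symb
  split_ifs with h
  · subst h; simp [aC_zero]
  · rw [aC_ne (by exact_mod_cast h)]
    push_cast
    rfl

theorem aC_neg (z : ℂ) : aC (-z) = aC z := by
  by_cases hz : z = 0
  · subst hz; simp
  · rw [aC_ne hz, aC_ne (neg_ne_zero.2 hz), neg_div, Complex.sin_neg, neg_div_neg_eq]

theorem aC_integral (k : ℝ) : ∫ t in (-1/2:ℝ)..(1/2), Complex.exp (Complex.I * k * t) = aC k := by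
  by_cases hk : k = 0
  · subst hk
    simp [aC_zero]
    norm_num
  · have hk' : (k : ℂ) ≠ 0 := by exact_mod_cast hk
    rw [integral_exp_mul_complex (mul_ne_zero Complex.I_ne_zero hk'), aC_ne hk', Complex.sin]
    have : Complex.I * Complex.I = -1 := Complex.I_mul_I
    push_cast
    have e1 : Complex.I * k * (1/2) = k / 2 * Complex.I := by ring
    have e2 : Complex.I * k * (-1/2) = -(k / 2) * Complex.I := by ring
    rw [e1, e2]
    field_simp
    ring_nf
    simp [Complex.I_sq]
    ring

/-- factorisation of entire functions with zeros at `±k` -/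
theorem factor {f : ℂ → ℂ} (hf : Differentiable ℂ f) {k : ℂ} (hk : k ≠ 0) (h1 : f k = 0)
    (h2 : f (-k) = 0) : ∃ F : ℂ → ℂ, Differentiable ℂ F ∧ ∀ z, f z = (z - k) * (z + k) * F z := by
  refine ⟨dslope (dslope f k) (-k), dslope_entire (dslope_entire hf k) _, fun z => ?_⟩
  have e1 : ∀ z, f z = (z - k) * dslope f k z := fun z => by
    have := sub_smul_dslope f k z
    rw [h1, smul_eq_mul, sub_zero] at this
    exact this.symm
  have e0 : dslope f k (-k) = 0 := by
    have := e1 (-k)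
    rw [h2] at this
    have h3 : (-k - k) ≠ 0 := by
      intro h; apply hk; linear_combination (-1/2) * h
    exact (mul_eq_zero.1 this.symm).resolve_left h3
  have e2 := sub_smul_dslope (dslope f k) (-k) z
  rw [e0, smul_eq_mul, sub_zero, sub_neg_eq_add] at e2
  rw [e1 z, ← e2]
  ring

theorem smooth_of_entire {f : ℂ → ℂ} (hf : Differentiable ℂ f) : ContDiff ℝ ∞ (fun k : ℝ => f k) := by
  have h1 : ContDiff ℂ ∞ f := hf.contDiff
  exact (h1.restrict_scalars ℝ).comp Complex.ofRealCLM.contDiff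

/-- the quotient `(cos(sk)-cos(s k_c))/m(k)` is smooth on the real line -/
theorem quotient_smooth (c kc : ℝ) (hkc : 0 < kc)
    (ha : symb kc = c) (hm' : deriv (msymb c) kc ≠ 0)
    (hroots : ∀ k : ℝ, k ≠ kc → k ≠ -kc → msymb c k ≠ 0) (s : ℝ) :
    ∃ q : ℝ → ℂ, ContDiff ℝ ∞ q ∧
      ∀ k : ℝ, q k * (aC k ^ 2 - c ^ 2) = 2 * Complex.cos (s * k) - 2 * Complex.cos (s * kc) := by
  have hk : (kc : ℂ) ≠ 0 := by exact_mod_cast hkc.ne'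
  set mC : ℂ → ℂ := fun z => aC z ^ 2 - (c : ℂ) ^ 2 with hmC
  have hmd : Differentiable ℂ mC := (aC_entire.pow 2).sub_const _
  have m1 : mC kc = 0 := by simp [hmC, aC_real, ha]
  have m2 : mC (-kc) = 0 := by simp [hmC, aC_neg, aC_real, ha]
  obtain ⟨N, hN, hNf⟩ := factor hmd hk m1 m2
  obtain ⟨E, hE, hEf⟩ := factor (f := fun z => 2 * Complex.cos (s * z) - 2 * Complex.cos (s * kc))
    (by fun_prop) hk (by simp) (by simp)
  have mreal : ∀ k : ℝ, mC k = (msymb c k : ℂ) := fun k => by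
    simp [hmC, aC_real, msymb]
  have hder : deriv mC kc ≠ 0 := by
    intro h0
    have h1 : HasDerivAt mC 0 kc := by rw [← h0]; exact (hmd _).hasDerivAt
    have h2 := h1.real_of_complex
    have h3 : (fun x : ℝ => (mC x).re) = msymb c := by
      ext x; rw [mreal, Complex.ofReal_re]
    rw [h3] at h2
    exact hm' h2.deriv
  have hN1 : N kc ≠ 0 := by
    intro h0
    apply hder
    have hev : mC = fun z => (z - kc) * ((z + kc) * N z) := by ext z; rw [hNf z]; ring
    have h1 : HasDerivAt (fun z : ℂ => (z - kc) * ((z + kc) * N z))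
        (1 * ((kc + kc) * N kc) + (kc - kc) * deriv (fun z : ℂ => (z + kc) * N z) kc) kc := by
      apply HasDerivAt.mul
      · exact (hasDerivAt_id _).sub_const _
      · apply DifferentiableAt.hasDerivAt
        have := hN (kc : ℂ)
        fun_prop
    rw [hev, h1.deriv, h0]
    simp
  have hN2 : ∀ z, N (-z) = N z := by
    have hcl : Continuous fun z => N (-z) := hN.continuous.comp continuous_neg
    have hd : Dense ({(kc : ℂ), -(kc : ℂ)}ᶜ : Set ℂ) :=
      (Set.Finite.countable (by simp)).dense_compl ℝ
    intro z
    refine congrFun (Continuous.ext_on hd hcl hN.continuous ?_) z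
    intro z hz
    simp only [Set.mem_compl_iff, Set.mem_insert_iff, Set.mem_singleton_iff, not_or] at hz
    have e1 := hNf z
    have e2 := hNf (-z)
    have e3 : mC (-z) = mC z := by simp [hmC, aC_neg]
    rw [e3, e1] at e2
    have n1 : z - kc ≠ 0 := sub_ne_zero.2 hz.1
    have n2 : z + kc ≠ 0 := by intro h; exact hz.2 (by linear_combination h)
    apply mul_left_cancel₀ (mul_ne_zero n1 n2)
    linear_combination -e2
  have hNne : ∀ k : ℝ, N k ≠ 0 := by
    intro k h0
    by_cases h1 : k = kc
    · subst h1; exact hN1 h0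
    by_cases h2 : k = -kc
    · subst h2
      push_cast at h0
      rw [hN2] at h0
      exact hN1 h0
    apply hroots k h1 h2
    have := hNf k
    rw [h0, mreal, mul_zero] at this
    exact_mod_cast this
  refine ⟨fun k => E k * (N k)⁻¹, (smooth_of_entire hE).mul ((smooth_of_entire hN).inv hNne), fun k => ?_⟩
  have e1 := hNf k
  have e2 := hEf k
  have := hNne k
  change E k * (N k)⁻¹ * mC k = _
  rw [e1, e2]
  field_simp

/-! ### Section 3: pairing with band-limited functions -/

open scoped ContDiff

theorem Eh_avg {h : ℝ → ℂ} (hc : HasCompactSupport h) (hs : ContDiff ℝ ∞ h) (y : ℝ) :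
    ∫ t in (-1/2:ℝ)..(1/2), Eh h (y - t) = Eh (fun k => aC k * h k) y := by
  have h1 : ∫ t in (-1/2:ℝ)..(1/2), Eh h (y - t) = ∫ t in (-1/2:ℝ)..(1/2), Eh h (y + t) := by
    have := intervalIntegral.integral_comp_neg (a := (-1/2:ℝ)) (b := 1/2) (fun t => Eh h (y + t))
    have e : (- (-1/2:ℝ)) = 1/2 := by norm_num
    have e' : (- (1/2:ℝ)) = -1/2 := by norm_num
    rw [e, e'] at this
    rw [← this]
    simp only [sub_eq_add_neg]
  rw [h1]
  unfold Eh
  rw [intervalIntegral_integral_swap]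
  · congr 1
    ext k
    change _ = Complex.exp (Complex.I * k * y) * (aC k * h k)
    rw [intervalIntegral.integral_mul_const, ← aC_integral k]
    rw [← mul_assoc, ← intervalIntegral.integral_const_mul]
    congr 2
    ext t
    rw [← Complex.exp_add]
    congr 1
    push_cast
    ring
  · have hh : Integrable h := hs.continuous.integrable_of_hasCompactSupport hc
    have hbase : Integrable (fun p : ℝ × ℝ => (1:ℂ) * h p.2)
        ((volume.restrict (Set.uIoc (-1/2:ℝ) (1/2))).prod volume) := by
      apply Integrable.mul_prod (f := fun _ : ℝ => (1:ℂ)) (g := h) _ hh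
      rw [← IntegrableOn, integrableOn_const_iff]
      right
      rw [Set.uIoc]; simp
    have hm : Continuous (fun p : ℝ × ℝ => Complex.exp (Complex.I * p.2 * ((y + p.1 : ℝ) : ℂ))) := by
      fun_prop
    have := hbase.bdd_mul (c := 1) hm.aestronglyMeasurable (Eventually.of_forall (fun p => by
      rw [Complex.norm_exp]; simp))
    refine this.congr (Eventually.of_forall (fun p => ?_))
    simp [Function.uncurry]

theorem pair_A {F : ℝ → ℝ} {B : ℝ} (hF : Measurable F) (hB : ∀ x, |F x| ≤ B)
    {h : ℝ → ℂ} (hc : HasCompactSupport h) (hs : ContDiff ℝ ∞ h) :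
    ∫ y, (Aop F y : ℂ) * Eh h y = ∫ y, (F y : ℂ) * Eh (fun k => aC k * h k) y := by
  have hI := Eh_integrable hc hs
  have hC := Eh_continuous hc hs
  have hfin : IsFiniteMeasure (volume.restrict (Set.uIoc (-1/2:ℝ) (1/2))) := by
    rw [Set.uIoc]
    exact ⟨by simp⟩
  have hFm : Measurable (fun y => (F y : ℂ)) := Complex.measurable_ofReal.comp hF
  have h1 : ∀ y, (Aop F y : ℂ) * Eh h y = ∫ t in (-1/2:ℝ)..(1/2), (F (y + t) : ℂ) * Eh h y := by
    intro y
    rw [intervalIntegral.integral_mul_const, Aop_eq, intervalIntegral.integral_ofReal]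
  have h2 : ∀ y, (F y : ℂ) * Eh (fun k => aC k * h k) y =
      ∫ t in (-1/2:ℝ)..(1/2), (F y : ℂ) * Eh h (y - t) := by
    intro y
    rw [intervalIntegral.integral_const_mul, Eh_avg hc hs]
  simp_rw [h1, h2]
  rw [← intervalIntegral_integral_swap, ← intervalIntegral_integral_swap]
  · congr 1
    ext t
    rw [← integral_sub_right_eq_self _ t]
    simp
  · have hm : Continuous (fun p : ℝ × ℝ => Eh h (p.2 - p.1)) := hC.comp (by fun_prop)
    have hbase : Integrable (fun p : ℝ × ℝ => Eh h (p.2 - p.1))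
        ((volume.restrict (Set.uIoc (-1/2:ℝ) (1/2))).prod volume) := by
      rw [integrable_prod_iff hm.aestronglyMeasurable]
      refine ⟨Eventually.of_forall (fun t => hI.comp_sub_right t), ?_⟩
      have : ∀ t : ℝ, ∫ y, ‖Eh h (y - t)‖ = ∫ y, ‖Eh h y‖ := fun t =>
        integral_sub_right_eq_self (fun y => ‖Eh h y‖) t
      simp_rw [this]
      exact integrable_const _
    have hm2 : Measurable (fun p : ℝ × ℝ => (F p.2 : ℂ)) := hFm.comp measurable_snd
    exact hbase.bdd_mul (c := B) hm2.aestronglyMeasurable (Eventually.of_forall (fun p => by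
      rw [Complex.norm_real]; exact hB _))
  · have hbase : Integrable (fun p : ℝ × ℝ => (1:ℂ) * Eh h p.2)
        ((volume.restrict (Set.uIoc (-1/2:ℝ) (1/2))).prod volume) :=
      Integrable.mul_prod (f := fun _ : ℝ => (1:ℂ)) (g := Eh h) (integrable_const _) hI
    have hm2 : Measurable (fun p : ℝ × ℝ => (F (p.2 + p.1) : ℂ)) := hFm.comp (by fun_prop)
    have := hbase.bdd_mul (c := B) hm2.aestronglyMeasurable (Eventually.of_forall (fun p => by
      rw [Complex.norm_real]; exact hB _))
    refine this.congr (Eventually.of_forall (fun p => ?_))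
    simp [Function.uncurry]

theorem pair_int {F : ℝ → ℝ} {B : ℝ} (hF : Measurable F) (hB : ∀ x, |F x| ≤ B)
    {ψ : ℝ → ℂ} (hψ : Integrable ψ) : Integrable (fun y => (F y : ℂ) * ψ y) :=
  hψ.bdd_mul (c := B) (Complex.measurable_ofReal.comp hF).aestronglyMeasurable
    (Eventually.of_forall (fun p => by rw [Complex.norm_real]; exact hB _))

theorem pair_shift (F : ℝ → ℝ) (ψ : ℝ → ℂ) (s : ℝ) :
    ∫ y, (F (y + s) : ℂ) * ψ y = ∫ y, (F y : ℂ) * ψ (y - s) := by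
  rw [← integral_add_right_eq_self (fun y => (F y : ℂ) * ψ (y - s)) s]
  simp

theorem int_lin {f g h : ℝ → ℂ} (hf : Integrable f) (hg : Integrable g) (hh : Integrable h) (r : ℂ) :
    ∫ y, (f y + g y - r * h y) = (∫ y, f y) + (∫ y, g y) - r * ∫ y, h y := by
  have e1 : Integrable (fun y => f y + g y) := hf.add hg
  have e2 : Integrable (fun y => r * h y) := hh.const_mul r
  rw [integral_sub e1 e2, integral_add hf hg, integral_const_mul]

theorem int_lin2 {f h : ℝ → ℂ} (hf : Integrable f) (hh : Integrable h) (r : ℂ) :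
    ∫ y, (f y - r * h y) = (∫ y, f y) - r * ∫ y, h y := by
  have e2 : Integrable (fun y => r * h y) := hh.const_mul r
  rw [integral_sub hf e2, integral_const_mul]

/-- second difference adapted to `k_c` -/
noncomputable def Wd (kc s : ℝ) (U : ℝ → ℝ) (x : ℝ) : ℝ :=
  U (x + s) + U (x - s) - 2 * Real.cos (s * kc) * U x

theorem key_pair (c kc : ℝ) (hkc : 0 < kc)
    (ha : symb kc = c) (hm' : deriv (msymb c) kc ≠ 0)
    (hroots : ∀ k : ℝ, k ≠ kc → k ≠ -kc → msymb c k ≠ 0) (s : ℝ)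
    {h : ℝ → ℂ} (hc : HasCompactSupport h) (hs : ContDiff ℝ ∞ h) :
    ∃ ψ : ℝ → ℂ, Integrable ψ ∧ ∀ (U : ℝ → ℝ) (B : ℝ), Measurable U → (∀ x, |U x| ≤ B) →
      ∫ y, (Wd kc s U y : ℂ) * Eh h y = ∫ y, (Mop c U y : ℂ) * ψ y := by
  obtain ⟨q, hq, hqm⟩ := quotient_smooth c kc hkc ha hm' hroots s
  have ac : ContDiff ℝ ∞ (fun k : ℝ => aC k) := smooth_of_entire aC_entire
  have c1 : HasCompactSupport (fun k => q k * h k) := hc.mul_left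
  have s1 : ContDiff ℝ ∞ (fun k => q k * h k) := hq.mul hs
  have c2 : HasCompactSupport (fun k : ℝ => aC k * (q k * h k)) := c1.mul_left
  have s2 : ContDiff ℝ ∞ (fun k : ℝ => aC k * (q k * h k)) := ac.mul s1
  have c3 : HasCompactSupport (fun k : ℝ => aC k * (aC k * (q k * h k))) := c2.mul_left
  have s3 : ContDiff ℝ ∞ (fun k : ℝ => aC k * (aC k * (q k * h k))) := ac.mul s2
  refine ⟨Eh (fun k => q k * h k), Eh_integrable c1 s1, fun U B hU hB => ?_⟩
  have eq1 : ∫ y, (Mop c U y : ℂ) * Eh (fun k => q k * h k) y =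
      ∫ y, (U y : ℂ) * (Eh (fun k : ℝ => aC k * (aC k * (q k * h k))) y
        - (c:ℂ)^2 * Eh (fun k => q k * h k) y) := by
    have e1 : ∀ y, (Mop c U y : ℂ) * Eh (fun k => q k * h k) y =
        (Aop (Aop U) y : ℂ) * Eh (fun k => q k * h k) y
          - (c:ℂ)^2 * ((U y : ℂ) * Eh (fun k => q k * h k) y) := by
      intro y; unfold Mop; push_cast; ring
    have e2 : ∀ y, (U y : ℂ) * (Eh (fun k : ℝ => aC k * (aC k * (q k * h k))) y
        - (c:ℂ)^2 * Eh (fun k => q k * h k) y) =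
        (U y : ℂ) * Eh (fun k : ℝ => aC k * (aC k * (q k * h k))) y
        - (c:ℂ)^2 * ((U y : ℂ) * Eh (fun k => q k * h k) y) := by
      intro y; ring
    simp_rw [e1, e2]
    have mA : Measurable (Aop U) := (Aop_cont hU hB).measurable
    have mAA : Measurable (Aop (Aop U)) := (Aop_cont mA (Aop_bound hB)).measurable
    rw [integral_sub (pair_int mAA (Aop_bound (Aop_bound hB)) (Eh_integrable c1 s1))
      ((pair_int hU hB (Eh_integrable c1 s1)).const_mul _),
      integral_sub (pair_int hU hB (Eh_integrable c3 s3))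
      ((pair_int hU hB (Eh_integrable c1 s1)).const_mul _)]
    rw [pair_A mA (Aop_bound hB) c1 s1, pair_A hU hB c2 s2]
  have eq2 : ∫ y, (Wd kc s U y : ℂ) * Eh h y =
      ∫ y, (U y : ℂ) * (Eh h (y - s) + Eh h (y + s) - 2 * Complex.cos (s * kc) * Eh h y) := by
    have i0 := Eh_integrable hc hs
    have im : Integrable fun y => Eh h (y - s) := i0.comp_sub_right s
    have ip : Integrable fun y => Eh h (y + s) := i0.comp_add_right s
    have e1 : ∀ y, (Wd kc s U y : ℂ) * Eh h y = (U (y + s) : ℂ) * Eh h y + (U (y + -s) : ℂ) * Eh h y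
        - 2 * Complex.cos (s * kc) * ((U y : ℂ) * Eh h y) := by
      intro y; unfold Wd; push_cast; rw [← sub_eq_add_neg]; ring
    have e2 : ∀ y, (U y : ℂ) * (Eh h (y - s) + Eh h (y + s) - 2 * Complex.cos (s * kc) * Eh h y)
        = (U y : ℂ) * Eh h (y - s) + (U y : ℂ) * Eh h (y + s)
          - 2 * Complex.cos (s * kc) * ((U y : ℂ) * Eh h y) := by
      intro y; ring
    simp_rw [e1, e2]
    have hUs : ∀ s, Integrable (fun y => (U (y + s) : ℂ) * Eh h y) := fun s =>
      pair_int (F := fun y => U (y + s)) (hU.comp (by fun_prop)) (fun x => hB _) i0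
    rw [int_lin (hUs s) (hUs (-s)) (pair_int hU hB i0),
      int_lin (pair_int hU hB im) (pair_int hU hB ip) (pair_int hU hB i0),
      pair_shift U _ s, pair_shift U _ (-s)]
    simp only [sub_neg_eq_add]
  rw [eq1, eq2]
  congr 1
  ext y
  congr 1
  unfold Eh
  rw [← int_lin (Eh_int hc hs _) (Eh_int hc hs _) (Eh_int hc hs _),
    ← int_lin2 (Eh_int c3 s3 _) (Eh_int c1 s1 _)]
  congr 1
  ext k
  have h1 := hqm k
  have e1 : Complex.exp (Complex.I * k * ((y - s : ℝ) : ℂ)) =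
      Complex.exp (Complex.I * k * y) * Complex.exp (-(s * k) * Complex.I) := by
    rw [← Complex.exp_add]; congr 1; push_cast; ring
  have e2 : Complex.exp (Complex.I * k * ((y + s : ℝ) : ℂ)) =
      Complex.exp (Complex.I * k * y) * Complex.exp ((s * k) * Complex.I) := by
    rw [← Complex.exp_add]; congr 1; push_cast; ring
  have e3 := Complex.two_cos (s * k : ℂ)
  rw [e1, e2]
  linear_combination (-Complex.exp (Complex.I * k * y) * h k) * (h1 + e3)

/-! ### Section 4: second differences of solutions -/

open scoped ContDiff

theorem exists_bump : ∃ h : ℝ → ℂ, HasCompactSupport h ∧ ContDiff ℝ ∞ h ∧ 2 * π * h 0 = 1 := by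
  let b : ContDiffBump (0:ℝ) := ⟨1, 2, by norm_num, by norm_num⟩
  refine ⟨fun x => (b x : ℂ) * (1 / (2 * π) : ℂ), ?_, ?_, ?_⟩
  · apply HasCompactSupport.mul_right
    exact b.hasCompactSupport.comp_left (g := fun r : ℝ => (r : ℂ)) (by simp)
  · exact (Complex.ofRealCLM.contDiff.comp b.contDiff).mul contDiff_const
  · have : b 0 = 1 := b.one_of_mem_closedBall (by simp [b])
    change 2 * π * ((b 0 : ℂ) * (1 / (2 * π) : ℂ)) = 1
    rw [this]
    have : (π : ℂ) ≠ 0 := by exact_mod_cast Real.pi_ne_zero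
    field_simp
    simp

theorem Wd_lip (kc s : ℝ) {U : ℝ → ℝ} {K : ℝ} (hK : ∀ x y, |U x - U y| ≤ K * |x - y|) (x y : ℝ) :
    |Wd kc s U x - Wd kc s U y| ≤ 4 * K * |x - y| := by
  unfold Wd
  have h1 := hK (x + s) (y + s)
  have h2 := hK (x - s) (y - s)
  have h3 := hK x y
  have e1 : x + s - (y + s) = x - y := by ring
  have e2 : x - s - (y - s) = x - y := by ring
  rw [e1] at h1
  rw [e2] at h2
  have h4 : |2 * Real.cos (s * kc) * (U x - U y)| ≤ 2 * (K * |x - y|) := by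
    rw [abs_mul, abs_mul]
    have := Real.abs_cos_le_one (s * kc)
    rw [abs_two]
    have h5 := abs_nonneg (Real.cos (s * kc))
    have h6 := abs_nonneg (U x - U y)
    nlinarith
  rw [abs_le] at *
  constructor <;> nlinarith

theorem Wd_est (c kc : ℝ) (hkc : 0 < kc)
    (ha : symb kc = c) (hm' : deriv (msymb c) kc ≠ 0)
    (hroots : ∀ k : ℝ, k ≠ kc → k ≠ -kc → msymb c k ≠ 0) (s K ε : ℝ) (hε : 0 < ε) :
    ∃ ψ : ℝ → ℂ, Integrable ψ ∧ ∀ (U : ℝ → ℝ) (B : ℝ), (∀ x, |U x| ≤ B) →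
      (∀ x y, |U x - U y| ≤ K * |x - y|) →
      ∀ x, ‖(Wd kc s U x : ℂ) - ∫ y, (Mop c U (y + x) : ℂ) * ψ y‖ ≤ ε := by
  obtain ⟨h, hc, hs, h0⟩ := exists_bump
  set J := ∫ y, |y| * ‖Eh h y‖ with hJ
  have hJ0 : 0 ≤ J := integral_nonneg (fun y => by positivity)
  set R : ℝ := (4 * |K| * J + 1) / ε with hRdef
  have hR : 0 < R := by positivity
  have hc' : HasCompactSupport (fun k => h (k / R)) := by
    have := hc.comp_homeomorph (Homeomorph.mulRight₀ R⁻¹ (by positivity))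
    exact this
  have hs' : ContDiff ℝ ∞ (fun k => h (k / R)) := hs.comp (by fun_prop)
  obtain ⟨ψ, hψ, hpair⟩ := key_pair c kc hkc ha hm' hroots s hc' hs'
  refine ⟨ψ, hψ, fun U B hB hK x => ?_⟩
  have hUc : Continuous U := cont_of_lip hK
  have hp := hpair (fun y => U (y + x)) B (by fun_prop) (fun y => hB _)
  simp_rw [Mop_shift] at hp
  rw [← hp]
  have hWs : ∀ y, Wd kc s (fun y => U (y + x)) y = Wd kc s U (y + x) := fun y => by
    unfold Wd; ring_nf
  simp_rw [hWs]
  have hI := Eh_integrable hc' hs'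
  have hinteg : ∫ y, Eh (fun k => h (k / R)) y = 1 := by
    rw [Eh_integral hc' hs', zero_div, h0]
  have e1 : (Wd kc s U x : ℂ) = ∫ y, (Wd kc s U x : ℂ) * Eh (fun k => h (k / R)) y := by
    rw [integral_const_mul, hinteg, mul_one]
  have hWc : Continuous (Wd kc s U) := cont_of_lip (Wd_lip kc s hK)
  have hWb : ∀ x, |Wd kc s U x| ≤ 4 * B := by
    intro x
    unfold Wd
    have h1 := hB (x + s)
    have h2 := hB (x - s)
    have h3 := hB x
    have h4 : |2 * Real.cos (s * kc) * U x| ≤ 2 * B := by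
      rw [abs_mul, abs_mul, abs_two]
      have := Real.abs_cos_le_one (s * kc)
      have h5 := abs_nonneg (Real.cos (s * kc))
      have h6 := abs_nonneg (U x)
      nlinarith
    rw [abs_le] at *
    constructor <;> linarith
  rw [e1, ← integral_sub (hI.const_mul _)
    (pair_int (F := fun y => Wd kc s U (y + x)) (by fun_prop) (fun y => hWb _) hI)]
  have hbd : ∀ y, ‖(Wd kc s U x : ℂ) * Eh (fun k => h (k / R)) y
      - (Wd kc s U (y + x) : ℂ) * Eh (fun k => h (k / R)) y‖
      ≤ (4 * |K|) * (|R * y| * ‖Eh h (R * y)‖) := by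
    intro y
    rw [← sub_mul, norm_mul, ← Complex.ofReal_sub, Complex.norm_real, Eh_scale h hR, norm_mul,
      Complex.norm_real, Real.norm_eq_abs, Real.norm_eq_abs, abs_mul R y]
    have h1 := Wd_lip kc s hK x (y + x)
    have e : x - (y + x) = -y := by ring
    rw [e, abs_neg] at h1
    have h2 : 4 * K * |y| ≤ 4 * |K| * |y| := by
      have := le_abs_self K
      have := abs_nonneg y
      nlinarith
    calc |Wd kc s U x - Wd kc s U (y + x)| * (|R| * ‖Eh h (R * y)‖)
        ≤ (4 * |K| * |y|) * (|R| * ‖Eh h (R * y)‖) := by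
          apply mul_le_mul_of_nonneg_right (h1.trans h2) (by positivity)
      _ = _ := by ring
  have hi2 : Integrable (fun y => |R * y| * ‖Eh h (R * y)‖) :=
    (Eh_integrable_abs hc hs).comp_mul_left' hR.ne'
  refine (norm_integral_le_integral_norm _).trans ?_
  refine (integral_mono_of_nonneg (Eventually.of_forall (fun y => norm_nonneg _)) (hi2.const_mul _)
    (Eventually.of_forall hbd)).trans ?_
  rw [integral_const_mul, Measure.integral_comp_mul_left (fun y => |y| * ‖Eh h y‖) R, ← hJ,
    abs_of_pos (inv_pos.2 hR), smul_eq_mul, hRdef, inv_div]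
  have : 0 ≤ |K| := abs_nonneg K
  have hp : 0 < 4 * |K| * J + 1 := by positivity
  have : 4 * |K| * (ε / (4 * |K| * J + 1) * J) = ε * ((4 * |K| * J) / (4 * |K| * J + 1)) := by
    field_simp
  rw [this]
  have h1 : (4 * |K| * J) / (4 * |K| * J + 1) ≤ 1 := by
    rw [div_le_one hp]; linarith
  nlinarith

theorem Mop_bound (c : ℝ) {U : ℝ → ℝ} {B : ℝ} (hB : ∀ x, |U x| ≤ B) (x : ℝ) :
    |Mop c U x| ≤ (1 + c^2) * B := by
  unfold Mop
  have h1 := Aop_bound (Aop_bound hB) x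
  have h2 := hB x
  have h3 : |c^2 * U x| ≤ c^2 * B := by
    rw [abs_mul, abs_of_nonneg (sq_nonneg c)]
    exact mul_le_mul_of_nonneg_left h2 (sq_nonneg c)
  refine (abs_sub _ _).trans ?_
  linarith

theorem Mop_cont (c : ℝ) {U : ℝ → ℝ} {B : ℝ} (hU : Continuous U) (hB : ∀ x, |U x| ≤ B) :
    Continuous (Mop c U) := by
  have h1 := Aop_cont hU.measurable hB
  have h2 := Aop_cont h1.measurable (Aop_bound hB)
  unfold Mop
  fun_prop

theorem Wd_zero (c kc : ℝ) (hkc : 0 < kc)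
    (ha : symb kc = c) (hm' : deriv (msymb c) kc ≠ 0)
    (hroots : ∀ k : ℝ, k ≠ kc → k ≠ -kc → msymb c k ≠ 0) {U : ℝ → ℝ} {B K : ℝ}
    (hB : ∀ x, |U x| ≤ B) (hK : ∀ x y, |U x - U y| ≤ K * |x - y|) (hM : ∀ x, Mop c U x = 0)
    (s x : ℝ) : Wd kc s U x = 0 := by
  by_contra hne
  obtain ⟨ψ, hψ, hest⟩ := Wd_est c kc hkc ha hm' hroots s K (|Wd kc s U x| / 2)
    (by have := abs_pos.2 hne; positivity)
  have := hest U B hB hK x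
  simp only [hM, Complex.ofReal_zero, zero_mul, integral_zero, sub_zero, Complex.norm_real,
    Real.norm_eq_abs] at this
  have h2 := abs_pos.2 hne
  linarith

theorem Wd_tendsto (c kc : ℝ) (hkc : 0 < kc)
    (ha : symb kc = c) (hm' : deriv (msymb c) kc ≠ 0)
    (hroots : ∀ k : ℝ, k ≠ kc → k ≠ -kc → msymb c k ≠ 0) {U : ℝ → ℝ} {B K : ℝ}
    (hB : ∀ x, |U x| ≤ B) (hK : ∀ x y, |U x - U y| ≤ K * |x - y|)
    (hM : Tendsto (Mop c U) atTop (𝓝 0)) (s : ℝ) : Tendsto (Wd kc s U) atTop (𝓝 0) := by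
  rw [Metric.tendsto_nhds]
  intro ε hε
  obtain ⟨ψ, hψ, hest⟩ := Wd_est c kc hkc ha hm' hroots s K (ε / 2) (by positivity)
  have hUc : Continuous U := cont_of_lip hK
  have hMc := Mop_cont c hUc hB
  have ht : Tendsto (fun x => ∫ y, (Mop c U (y + x) : ℂ) * ψ y) atTop (𝓝 (∫ y : ℝ, (0:ℂ))) := by
    apply tendsto_integral_filter_of_dominated_convergence (fun y => ((1 + c^2) * B) * ‖ψ y‖)
    · refine Eventually.of_forall (fun x => ?_)
      exact (pair_int (F := fun y => Mop c U (y + x)) (by fun_prop) (fun y => Mop_bound c hB _)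
        hψ).aestronglyMeasurable
    · refine Eventually.of_forall (fun x => Eventually.of_forall (fun y => ?_))
      rw [norm_mul, Complex.norm_real]
      exact mul_le_mul_of_nonneg_right (Mop_bound c hB _) (norm_nonneg _)
    · exact hψ.norm.const_mul _
    · refine Eventually.of_forall (fun y => ?_)
      have h1 : Tendsto (fun x => Mop c U (y + x)) atTop (𝓝 0) :=
        hM.comp (tendsto_atTop_add_const_left _ y tendsto_id)
      have h2 : Tendsto (fun x => (Mop c U (y + x) : ℂ)) atTop (𝓝 ((0:ℝ):ℂ)) :=
        (Complex.continuous_ofReal.tendsto 0).comp h1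
      have h3 := h2.mul_const (ψ y)
      simpa using h3
  rw [integral_zero, Metric.tendsto_nhds] at ht
  filter_upwards [ht (ε / 2) (by positivity)] with x hx
  have h1 := hest U B hB hK x
  rw [dist_zero_right] at hx ⊢
  rw [← Complex.norm_real]
  calc ‖(Wd kc s U x : ℂ)‖ ≤ ‖(Wd kc s U x : ℂ) - ∫ y, (Mop c U (y + x) : ℂ) * ψ y‖
        + ‖∫ y, (Mop c U (y + x) : ℂ) * ψ y‖ := norm_le_norm_sub_add _ _
    _ < ε := by linarith

/-! ### Section 5: asymptotics at `+∞` -/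

theorem sin_half {c kc : ℝ} (hkc : 0 < kc) (ha : symb kc = c) : Real.sin (kc / 2) = c * kc / 2 := by
  unfold symb at ha
  rw [if_neg hkc.ne'] at ha
  rw [← ha]
  field_simp

theorem cos_ne {c kc : ℝ} (hkc : 0 < kc) (ha : symb kc = c) (hm' : deriv (msymb c) kc ≠ 0) :
    c - Real.cos (kc / 2) ≠ 0 := by
  intro h0
  apply hm'
  have hs := sin_half hkc ha
  have h1 : HasDerivAt (fun k : ℝ => Real.sin (k / 2) / (k / 2))
      ((Real.cos (kc / 2) * (1 / 2) * (kc / 2) - Real.sin (kc / 2) * (1 / 2)) / (kc / 2) ^ 2) kc := by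
    have h2 : HasDerivAt (fun k : ℝ => k / 2) (1 / 2) kc := (hasDerivAt_id kc).div_const 2
    exact h2.sin.div h2 (by positivity)
  have h3 : Real.cos (kc / 2) * (1 / 2) * (kc / 2) - Real.sin (kc / 2) * (1 / 2) = 0 := by
    rw [hs]
    have : Real.cos (kc / 2) = c := by linarith
    rw [this]; ring
  rw [h3, zero_div] at h1
  have h4 : HasDerivAt symb 0 kc := by
    apply h1.congr_of_eventuallyEq
    filter_upwards [lt_mem_nhds hkc] with k hk
    unfold symb
    rw [if_neg hk.ne']
  have h5 : HasDerivAt (msymb c) (0 * symb kc + symb kc * 0) kc := by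
    refine ((h4.mul h4).sub_const (c * c)).congr_of_eventuallyEq (Eventually.of_forall fun k => ?_)
    simp only [msymb, Pi.mul_apply]
    ring
  rw [h5.deriv]
  simp

theorem Aop_cos {c kc : ℝ} (hkc : 0 < kc) (ha : symb kc = c) (y : ℝ) :
    Aop (fun y => Real.cos (kc * y)) y = c * Real.cos (kc * y) := by
  have h := sin_half hkc ha
  rw [Aop_of_deriv (F := fun y => Real.sin (kc * y) / kc)]
  · have e1 : kc * (y + 1/2) = kc * y + kc / 2 := by ring
    have e2 : kc * (y - 1/2) = kc * y - kc / 2 := by ring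
    rw [e1, e2, Real.sin_add, Real.sin_sub, h]
    field_simp
    ring
  · intro x
    have h2 : HasDerivAt (fun y : ℝ => kc * y) kc x := by simpa using (hasDerivAt_id x).const_mul kc
    have h3 := h2.sin.div_const kc
    have e : Real.cos (kc * x) * kc / kc = Real.cos (kc * x) := by field_simp
    rwa [e] at h3
  · fun_prop

theorem Aop_sin {c kc : ℝ} (hkc : 0 < kc) (ha : symb kc = c) (y : ℝ) :
    Aop (fun y => Real.sin (kc * y)) y = c * Real.sin (kc * y) := by
  have h := sin_half hkc ha
  rw [Aop_of_deriv (F := fun y => -Real.cos (kc * y) / kc)]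
  · have e1 : kc * (y + 1/2) = kc * y + kc / 2 := by ring
    have e2 : kc * (y - 1/2) = kc * y - kc / 2 := by ring
    rw [e1, e2, Real.cos_add, Real.cos_sub, h]
    field_simp
    ring
  · intro x
    have h2 : HasDerivAt (fun y : ℝ => kc * y) kc x := by simpa using (hasDerivAt_id x).const_mul kc
    have h3 := h2.cos.neg.div_const kc
    have e : -(-Real.sin (kc * x) * kc) / kc = Real.sin (kc * x) := by field_simp
    rwa [e] at h3
  · fun_prop

/-- deviation from the pure oscillation -/
noncomputable def Dv (kc : ℝ) (T : ℝ → ℝ) (x y : ℝ) : ℝ :=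
  T (x + y) - T x * Real.cos (kc * y) - T (x + π / (2 * kc)) * Real.sin (kc * y)

theorem Dv_eq {kc : ℝ} (hkc : 0 < kc) (T : ℝ → ℝ) (x y : ℝ) :
    Dv kc T x y = 1/2 * Wd kc y T x - 1/2 * Real.sin (kc * y) * Wd kc (π / (2 * kc)) T x
      + 1/4 * (Wd kc (π / (2 * kc)) T (x + (y - π / (2 * kc))) - Wd kc (π / (2 * kc)) T (x + (π / (2 * kc) - y))
        + Wd kc (y - π / (2 * kc)) T (x + π / (2 * kc)) - Wd kc (y - π / (2 * kc)) T (x + -(π / (2 * kc)))) := by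
  have h1 : Real.cos (π / (2 * kc) * kc) = 0 := by
    have : π / (2 * kc) * kc = π / 2 := by field_simp
    rw [this, Real.cos_pi_div_two]
  have h2 : Real.cos ((y - π / (2 * kc)) * kc) = Real.sin (kc * y) := by
    have : (y - π / (2 * kc)) * kc = kc * y - π / 2 := by field_simp
    rw [this, Real.cos_sub_pi_div_two]
  unfold Dv Wd
  rw [h1, h2]
  generalize π / (2 * kc) = p
  ring_nf

theorem Dv_tendsto {kc : ℝ} (hkc : 0 < kc) {T : ℝ → ℝ}
    (h : ∀ s, Tendsto (Wd kc s T) atTop (𝓝 0)) (y : ℝ) :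
    Tendsto (fun x => Dv kc T x y) atTop (𝓝 0) := by
  have hs : ∀ s a, Tendsto (fun x => Wd kc s T (x + a)) atTop (𝓝 0) := fun s a =>
    (h s).comp (tendsto_atTop_add_const_right _ a tendsto_id)
  simp_rw [Dv_eq hkc T]
  have := (((h y).const_mul (1/2)).sub ((h (π / (2 * kc))).const_mul (1/2 * Real.sin (kc * y)))).add
    (((((hs (π / (2 * kc)) (y - π / (2 * kc))).sub (hs (π / (2 * kc)) (π / (2 * kc) - y))).add
      (hs (y - π / (2 * kc)) (π / (2 * kc)))).sub (hs (y - π / (2 * kc)) (-(π / (2 * kc))))).const_mul (1/4))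
  simpa using this

theorem Dv_cont (kc : ℝ) {T : ℝ → ℝ} (hT : Continuous T) (x : ℝ) : Continuous (Dv kc T x) := by
  unfold Dv
  fun_prop

theorem Dv_bound (kc : ℝ) {T : ℝ → ℝ} {B : ℝ} (hB : ∀ x, |T x| ≤ B) (x y : ℝ) :
    |Dv kc T x y| ≤ 3 * B := by
  unfold Dv
  have aux : ∀ u v : ℝ, |u| ≤ B → |v| ≤ 1 → |u * v| ≤ B := fun u v hu hv => by
    rw [abs_mul]
    have := abs_nonneg u
    have := abs_nonneg v
    nlinarith
  have h1 := hB (x + y)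
  have h2 := aux _ _ (hB x) (Real.abs_cos_le_one (kc * y))
  have h3 := aux _ _ (hB (x + π / (2 * kc))) (Real.abs_sin_le_one (kc * y))
  rw [abs_le] at *
  constructor <;> linarith

theorem Aop_tendsto {D : ℝ → ℝ → ℝ} {B : ℝ} (hc : ∀ x, Continuous (D x)) (hB : ∀ x y, |D x y| ≤ B)
    (h : ∀ y, Tendsto (fun x => D x y) atTop (𝓝 0)) (y : ℝ) :
    Tendsto (fun x => Aop (D x) y) atTop (𝓝 0) := by
  unfold Aop
  have := intervalIntegral.tendsto_integral_filter_of_dominated_convergence (μ := volume)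
    (a := y - 1/2) (b := y + 1/2) (F := D) (f := fun _ => (0:ℝ)) (l := atTop) (fun _ => B)
    (Eventually.of_forall fun x => (hc x).aestronglyMeasurable)
    (Eventually.of_forall fun x => Eventually.of_forall fun y _ => hB x y)
    (by simp) (Eventually.of_forall fun y _ => h y)
  simpa using this

/-- conserved quantity -/
noncomputable def Qf (c : ℝ) (v H : ℝ → ℝ) (x : ℝ) : ℝ :=
  c * v x * H x - ∫ y in (x - 1/2)..x, (v y * H (y + 1/2) + v (y + 1/2) * H y)

theorem Qf_const {c : ℝ} {v v' H : ℝ → ℝ} (hH : Continuous H) (hv : ∀ x, HasDerivAt v (v' x) x)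
    (hv' : ∀ x, c * v' x = v (x + 1/2) - v (x - 1/2)) (hc : c ≠ 0)
    (hA : ∀ x, 1 < x → Aop H x = c * H x) :
    ∃ w, ∀ x, 1 < x → Qf c v H x = w := by
  have hvc : Continuous v := continuous_iff_continuousAt.2 fun x => (hv x).continuousAt
  have hd : ∀ x, 1 < x → HasDerivAt (Qf c v H) 0 x := by
    intro x hx
    have h1 : HasDerivAt H ((H (x + 1/2) - H (x - 1/2)) / c) x := by
      have := (Aop_hasDerivAt hH x).div_const c
      apply this.congr_of_eventuallyEq
      filter_upwards [lt_mem_nhds hx] with y hy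
      rw [hA y hy]
      field_simp
    set F : ℝ → ℝ := fun y => v y * H (y + 1/2) + v (y + 1/2) * H y with hF
    have hFc : Continuous F := by fun_prop
    have h2 : ∀ y, HasDerivAt (fun x => ∫ s in (0:ℝ)..x, F s) (F y) y := fun y =>
      intervalIntegral.integral_hasDerivAt_right (hFc.intervalIntegrable _ _)
        (hFc.stronglyMeasurableAtFilter _ _) hFc.continuousAt
    have h0 : Qf c v H = fun x => c * v x * H x -
        ((∫ s in (0:ℝ)..x, F s) - ∫ s in (0:ℝ)..(x - 1/2), F s) := by
      ext x
      unfold Qf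
      rw [intervalIntegral.integral_interval_sub_left] <;> exact hFc.intervalIntegrable _ _
    rw [h0]
    have h3 := (((hv x).const_mul c).mul h1).sub ((h2 x).sub ((h2 (x - 1/2)).comp_sub_const x (1/2)))
    refine h3.congr_deriv ?_
    rw [hF]
    simp only []
    rw [hv' x]
    have e : x - 1/2 + 1/2 = x := by ring
    rw [e]
    field_simp
    ring
  refine ⟨Qf c v H 2, fun x hx => ?_⟩
  have hconv : Convex ℝ (Set.Ioi (1:ℝ)) := convex_Ioi 1
  have := hconv.is_const_of_fderivWithin_eq_zero (𝕜 := ℝ) (f := Qf c v H)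
    (fun y hy => (hd y hy).differentiableAt.differentiableWithinAt) (fun y hy => by
      rw [fderivWithin_of_isOpen isOpen_Ioi hy]
      ext
      simp [(hd y hy).deriv]) (x := x) (y := 2) hx (by norm_num)
  exact this

theorem J1 {c kc : ℝ} (hkc : 0 < kc) (ha : symb kc = c) :
    ∫ y in (-1/2:ℝ)..0, (2 * (Real.cos (kc * y) * Real.cos (kc * (y + 1/2)))) = (c + Real.cos (kc / 2)) / 2 := by
  have h := sin_half hkc ha
  rw [intervalIntegral.integral_eq_sub_of_hasDerivAt
    (f := fun y => Real.sin (kc * (2 * y + 1/2)) / (2 * kc) + y * Real.cos (kc / 2))]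
  · have e1 : kc * (2 * 0 + 1/2) = kc / 2 := by ring
    have e2 : kc * (2 * (-1/2) + 1/2) = -(kc / 2) := by ring
    rw [e1, e2, Real.sin_neg, h]
    field_simp
    ring
  · intro x _
    have h2 : HasDerivAt (fun y : ℝ => kc * (2 * y + 1/2)) (kc * (2 * 1)) x :=
      (((hasDerivAt_id x).const_mul 2).add_const (1/2)).const_mul kc
    have h3 := (h2.sin.div_const (2 * kc)).add ((hasDerivAt_id x).mul_const (Real.cos (kc / 2)))
    refine h3.congr_deriv ?_
    have e1 : kc * (2 * x + 1/2) = kc * x + kc * (x + 1/2) := by ring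
    have e2 : kc / 2 = kc * (x + 1/2) - kc * x := by ring
    rw [e1, e2, Real.cos_add, Real.cos_sub]
    field_simp
    ring
  · apply Continuous.intervalIntegrable; fun_prop

theorem J2 {kc : ℝ} (hkc : 0 < kc) :
    ∫ y in (-1/2:ℝ)..0, (Real.cos (kc * y) * Real.sin (kc * (y + 1/2)) + Real.cos (kc * (y + 1/2)) * Real.sin (kc * y)) = 0 := by
  rw [intervalIntegral.integral_eq_sub_of_hasDerivAt
    (f := fun y => -Real.cos (kc * (2 * y + 1/2)) / (2 * kc))]
  · have e1 : kc * (2 * 0 + 1/2) = kc / 2 := by ring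
    have e2 : kc * (2 * (-1/2) + 1/2) = -(kc / 2) := by ring
    rw [e1, e2, Real.cos_neg]
    ring
  · intro x _
    have h2 : HasDerivAt (fun y : ℝ => kc * (2 * y + 1/2)) (kc * (2 * 1)) x :=
      (((hasDerivAt_id x).const_mul 2).add_const (1/2)).const_mul kc
    have h3 := h2.cos.neg.div_const (2 * kc)
    refine h3.congr_deriv ?_
    have e1 : kc * (2 * x + 1/2) = kc * x + kc * (x + 1/2) := by ring
    rw [e1, Real.sin_add]
    field_simp
    ring
  · apply Continuous.intervalIntegrable; fun_prop

/-! ### Section 6: asymptotic oscillation and the Green function -/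

theorem asymp (c kc : ℝ) (hc0 : 0 < c) (hkc : 0 < kc)
    (ha : symb kc = c) (hm' : deriv (msymb c) kc ≠ 0)
    (hroots : ∀ k : ℝ, k ≠ kc → k ≠ -kc → msymb c k ≠ 0) {T : ℝ → ℝ} {B K : ℝ}
    (hB : ∀ x, |T x| ≤ B) (hK : ∀ x y, |T x - T y| ≤ K * |x - y|)
    (hM : ∀ x, 1 < x → Mop c T x = 0) :
    ∃ α β : ℝ, Tendsto (fun x => T x - α * Real.cos (kc * x) - β * Real.sin (kc * x)) atTop (𝓝 0) := by
  have hT : Continuous T := cont_of_lip hK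
  have hMt : Tendsto (Mop c T) atTop (𝓝 0) := by
    refine tendsto_const_nhds.congr' ?_
    filter_upwards [eventually_gt_atTop 1] with x hx
    exact (hM x hx).symm
  have hW := Wd_tendsto c kc hkc ha hm' hroots hB hK hMt
  have hD := Dv_tendsto hkc hW
  set D := Dv kc T with hDdef
  have hDc : ∀ x, Continuous (D x) := Dv_cont kc hT
  have hDb : ∀ x y, |D x y| ≤ 3 * B := Dv_bound kc hB
  have hAD := Aop_tendsto hDc hDb hD
  have hATc : Continuous (Aop T) := Aop_cont hT.measurable hB
  set H : ℝ → ℝ := fun y => Aop T y + c * T y with hH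
  have hHc : Continuous H := by fun_prop
  have hHA : ∀ x, 1 < x → Aop H x = c * H x := by
    intro x hx
    have h1 : Aop H x = Aop (Aop T) x - Aop (fun y => (-c) * T y) x := by
      have := Aop_sub (F := Aop T) (G := fun y => (-c) * T y) (B := B) (B' := c * B) hATc.measurable
        (Aop_bound hB) (by fun_prop) (fun y => by
          rw [abs_mul, abs_neg, abs_of_pos hc0]
          exact mul_le_mul_of_nonneg_left (hB y) hc0.le) x
      rw [← this]
      congr 1
      ext y
      simp [hH]
    rw [h1, Aop_smul]
    have := hM x hx
    unfold Mop at this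
    simp only [hH]
    linear_combination this
  -- the remainder
  set E : ℝ → ℝ → ℝ := fun x y => Aop (D x) y + c * D x y with hE
  have hEc : ∀ x, Continuous (E x) := by
    intro x
    have h1 := Aop_cont (hDc x).measurable (hDb x)
    have h2 := hDc x
    fun_prop
  have hB0 : 0 ≤ B := (abs_nonneg _).trans (hB 0)
  have hEb : ∀ x y, |E x y| ≤ 3 * B + c * (3 * B) := by
    intro x y
    refine (abs_add_le _ _).trans ?_
    rw [abs_mul, abs_of_pos hc0]
    exact add_le_add (Aop_bound (hDb x) y) (mul_le_mul_of_nonneg_left (hDb x y) hc0.le)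
  have hEt : ∀ y, Tendsto (fun x => E x y) atTop (𝓝 0) := by
    intro y
    have := (hAD y).add ((hD y).const_mul c)
    simpa using this
  have hHE : ∀ x y, H (x + y) = 2 * c * (T x * Real.cos (kc * y) +
      T (x + π / (2 * kc)) * Real.sin (kc * y)) + E x y := by
    intro x y
    have e1 : Aop (D x) y = Aop T (x + y) - T x * (c * Real.cos (kc * y))
        - T (x + π / (2 * kc)) * (c * Real.sin (kc * y)) := by
      have aux : ∀ r s : ℝ, |s| ≤ 1 → |r * s| ≤ |r| := fun r s hs => by
        rw [abs_mul]; have := abs_nonneg r; nlinarith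
      have s1 := Aop_sub (F := fun y => T (x + y) - T x * Real.cos (kc * y))
        (G := fun y => T (x + π / (2 * kc)) * Real.sin (kc * y)) (B := B + |T x|)
        (B' := |T (x + π / (2 * kc))|) (by fun_prop)
        (fun y => (abs_sub _ _).trans (add_le_add (hB _) (aux _ _ (Real.abs_cos_le_one _))))
        (by fun_prop) (fun y => aux _ _ (Real.abs_sin_le_one _)) y
      have s2 := Aop_sub (F := fun y => T (x + y))
        (G := fun y => T x * Real.cos (kc * y)) (B := B) (B' := |T x|) (by fun_prop)
        (fun y => hB _) (by fun_prop) (fun y => aux _ _ (Real.abs_cos_le_one _)) y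
      have s3 : Aop (fun y => T (x + y)) y = Aop T (x + y) := by
        have := Aop_shift T x y
        simp_rw [add_comm _ x] at this
        exact this
      rw [s2, Aop_smul, Aop_smul, Aop_cos hkc ha, Aop_sin hkc ha, s3] at s1
      exact s1
    have e2 : D x y = T (x + y) - T x * Real.cos (kc * y) - T (x + π / (2 * kc)) * Real.sin (kc * y) := rfl
    simp only [hH, hE]
    rw [e1, e2]
    ring
  -- conserved quantities
  have hlin : ∀ x, HasDerivAt (fun y : ℝ => kc * y) kc x := fun x => by
    simpa using (hasDerivAt_id x).const_mul kc
  have hsh := sin_half hkc ha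
  obtain ⟨w1, hw1⟩ := Qf_const (c := c) (v := fun y => Real.cos (kc * y))
    (v' := fun y => -Real.sin (kc * y) * kc) hHc (fun x => (hlin x).cos) (fun x => by
      have e1 : kc * (x + 1/2) = kc * x + kc / 2 := by ring
      have e2 : kc * (x - 1/2) = kc * x - kc / 2 := by ring
      rw [e1, e2, Real.cos_add, Real.cos_sub, hsh]
      ring) hc0.ne' hHA
  obtain ⟨w2, hw2⟩ := Qf_const (c := c) (v := fun y => Real.sin (kc * y))
    (v' := fun y => Real.cos (kc * y) * kc) hHc (fun x => (hlin x).sin) (fun x => by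
      have e1 : kc * (x + 1/2) = kc * x + kc / 2 := by ring
      have e2 : kc * (x - 1/2) = kc * x - kc / 2 := by ring
      rw [e1, e2, Real.sin_add, Real.sin_sub, hsh]
      ring) hc0.ne' hHA
  -- combination at x
  set q := c - Real.cos (kc / 2) with hq
  have hq0 : q ≠ 0 := cos_ne hkc ha hm'
  set Er : ℝ → ℝ := fun x => c * E x 0 - ∫ y in (-1/2:ℝ)..0,
    (Real.cos (kc * y) * E x (y + 1/2) + Real.cos (kc * (y + 1/2)) * E x y) with hEr
  have hcomb : ∀ x, Real.cos (kc * x) * Qf c (fun y => Real.cos (kc * y)) H x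
      + Real.sin (kc * x) * Qf c (fun y => Real.sin (kc * y)) H x = c * q * T x + Er x := by
    intro x
    have sub : ∀ F : ℝ → ℝ, ∫ y in (x - 1/2)..x, F y = ∫ y in (-1/2:ℝ)..0, F (x + y) := by
      intro F
      rw [intervalIntegral.integral_comp_add_left]
      congr 1 <;> ring
    have hx0 : H x = 2 * c * T x + E x 0 := by
      have := hHE x 0
      simpa using this
    unfold Qf
    rw [sub, sub]
    have hcs := Real.cos_sq_add_sin_sq (kc * x)
    have e1 : Real.cos (kc * x) * (∫ y in (-1/2:ℝ)..0, (Real.cos (kc * (x + y)) * H (x + y + 1/2) + Real.cos (kc * (x + y + 1/2)) * H (x + y)))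
        + Real.sin (kc * x) * (∫ y in (-1/2:ℝ)..0, (Real.sin (kc * (x + y)) * H (x + y + 1/2) + Real.sin (kc * (x + y + 1/2)) * H (x + y)))
        = ∫ y in (-1/2:ℝ)..0, (2 * c * T x * (2 * (Real.cos (kc * y) * Real.cos (kc * (y + 1/2))))
          + 2 * c * T (x + π / (2 * kc)) * (Real.cos (kc * y) * Real.sin (kc * (y + 1/2)) + Real.cos (kc * (y + 1/2)) * Real.sin (kc * y))
          + (Real.cos (kc * y) * E x (y + 1/2) + Real.cos (kc * (y + 1/2)) * E x y)) := by
      rw [← intervalIntegral.integral_const_mul, ← intervalIntegral.integral_const_mul,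
        ← intervalIntegral.integral_add]
      · congr 1
        ext y
        have a1 : Real.cos (kc * y) = Real.cos (kc * x) * Real.cos (kc * (x + y)) + Real.sin (kc * x) * Real.sin (kc * (x + y)) := by
          have : kc * y = kc * (x + y) - kc * x := by ring
          rw [this, Real.cos_sub]; ring
        have a2 : Real.cos (kc * (y + 1/2)) = Real.cos (kc * x) * Real.cos (kc * (x + y + 1/2)) + Real.sin (kc * x) * Real.sin (kc * (x + y + 1/2)) := by
          have : kc * (y + 1/2) = kc * (x + y + 1/2) - kc * x := by ring
          rw [this, Real.cos_sub]; ring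
        have a3 := hHE x y
        have a4 := hHE x (y + 1/2)
        rw [← add_assoc] at a4
        have a5 : Real.cos (kc * x) * (Real.cos (kc * (x + y)) * H (x + y + 1/2) + Real.cos (kc * (x + y + 1/2)) * H (x + y))
          + Real.sin (kc * x) * (Real.sin (kc * (x + y)) * H (x + y + 1/2) + Real.sin (kc * (x + y + 1/2)) * H (x + y))
          = Real.cos (kc * y) * H (x + y + 1/2) + Real.cos (kc * (y + 1/2)) * H (x + y) := by
          rw [a1, a2]; ring
        rw [a5, a3, a4]
        ring
      · apply Continuous.intervalIntegrable; fun_prop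
      · apply Continuous.intervalIntegrable; fun_prop
    have hEx := hEc x
    have e2 : (∫ y in (-1/2:ℝ)..0, (2 * c * T x * (2 * (Real.cos (kc * y) * Real.cos (kc * (y + 1/2))))
          + 2 * c * T (x + π / (2 * kc)) * (Real.cos (kc * y) * Real.sin (kc * (y + 1/2)) + Real.cos (kc * (y + 1/2)) * Real.sin (kc * y))
          + (Real.cos (kc * y) * E x (y + 1/2) + Real.cos (kc * (y + 1/2)) * E x y)))
        = 2 * c * T x * ((c + Real.cos (kc / 2)) / 2) + ∫ y in (-1/2:ℝ)..0,
          (Real.cos (kc * y) * E x (y + 1/2) + Real.cos (kc * (y + 1/2)) * E x y) := by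
      rw [intervalIntegral.integral_add, intervalIntegral.integral_add,
        intervalIntegral.integral_const_mul (2 * c * T x), intervalIntegral.integral_const_mul (2 * c * T (x + π / (2 * kc))), J1 hkc ha, J2 hkc]
      · ring
      all_goals (apply Continuous.intervalIntegrable; fun_prop)
    rw [e2] at e1
    simp only [hEr]
    rw [hx0] at *
    linear_combination (c * (2 * c * T x + E x 0)) * hcs - e1
  have hErt : Tendsto Er atTop (𝓝 0) := by
    have h1 := intervalIntegral.tendsto_integral_filter_of_dominated_convergence (μ := volume)
      (a := (-1/2:ℝ)) (b := 0) (F := fun x y => (Real.cos (kc * y) * E x (y + 1/2) + Real.cos (kc * (y + 1/2)) * E x y))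
      (f := fun _ => (0:ℝ)) (l := atTop) (fun _ => 2 * (3 * B + c * (3 * B)))
      (Eventually.of_forall fun x => by
        have := hEc x
        apply Continuous.aestronglyMeasurable; fun_prop)
      (Eventually.of_forall fun x => Eventually.of_forall fun y _ => by
        have aux : ∀ r s M : ℝ, |r| ≤ 1 → |s| ≤ M → |r * s| ≤ M := fun r s M hr hs => by
          rw [abs_mul]; have := abs_nonneg s; have := abs_nonneg r; nlinarith
        rw [Real.norm_eq_abs]
        refine (abs_add_le _ _).trans ?_
        have a1 := aux _ _ _ (Real.abs_cos_le_one (kc * y)) (hEb x (y + 1/2))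
        have a2 := aux _ _ _ (Real.abs_cos_le_one (kc * (y + 1/2))) (hEb x y)
        linarith)
      (by simp) (Eventually.of_forall fun y _ => by
        have := ((hEt (y + 1/2)).const_mul (Real.cos (kc * y))).add ((hEt y).const_mul (Real.cos (kc * (y + 1/2))))
        simpa using this)
    have h2 := ((hEt 0).const_mul c).sub h1
    simp only [mul_zero, intervalIntegral.integral_zero, sub_zero] at h2
    exact h2
  refine ⟨w1 / (c * q), w2 / (c * q), ?_⟩
  have h3 := (hErt.div_const (c * q)).neg
  rw [zero_div, neg_zero] at h3
  refine h3.congr' ?_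
  filter_upwards [eventually_gt_atTop 1] with x hx
  have h4 := hcomb x
  rw [hw1 x hx, hw2 x hx] at h4
  field_simp
  linear_combination h4

theorem Mop_cos {c kc : ℝ} (hkc : 0 < kc) (ha : symb kc = c) (y : ℝ) :
    Mop c (fun y => Real.cos (kc * y)) y = 0 := by
  have h1 : Aop (fun y => Real.cos (kc * y)) = fun y => c * Real.cos (kc * y) := by
    ext y; exact Aop_cos hkc ha y
  unfold Mop
  rw [h1, Aop_smul, Aop_cos hkc ha]
  ring

theorem Mop_sin {c kc : ℝ} (hkc : 0 < kc) (ha : symb kc = c) (y : ℝ) :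
    Mop c (fun y => Real.sin (kc * y)) y = 0 := by
  have h1 : Aop (fun y => Real.sin (kc * y)) = fun y => c * Real.sin (kc * y) := by
    ext y; exact Aop_sin hkc ha y
  unfold Mop
  rw [h1, Aop_smul, Aop_sin hkc ha]
  ring

/-- uniqueness: solutions with a limit at `+∞` of the homogeneous equation vanish. -/
theorem hom_unique (c kc : ℝ) (hc0 : 0 < c) (hc1 : c < 1) (hkc : 0 < kc)
    (ha : symb kc = c) (hm' : deriv (msymb c) kc ≠ 0)
    (hroots : ∀ k : ℝ, k ≠ kc → k ≠ -kc → msymb c k ≠ 0) {T : ℝ → ℝ} {B K η l : ℝ}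
    (hB : ∀ x, |T x| ≤ B) (hK : ∀ x y, |T x - T y| ≤ K * |x - y|)
    (hM : ∀ x, Mop c T x = η) (hl : Tendsto T atTop (𝓝 l)) (h0 : T 0 = 0) : ∀ x, T x = 0 := by
  have hT : Continuous T := cont_of_lip hK
  have h1c : (1 - c^2) ≠ 0 := by nlinarith
  set r := η / (1 - c^2) with hr
  set U : ℝ → ℝ := fun x => T x - r with hU
  have hMU : ∀ x, Mop c U x = 0 := by
    intro x
    rw [hU, Mop_sub c hT.measurable hB (G := fun _ => r) (by fun_prop) (B' := |r|) (fun _ => le_rfl),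
      hM, Mop_const, hr]
    field_simp
    ring
  have hBU : ∀ x, |U x| ≤ B + |r| := fun x => (abs_sub _ _).trans (add_le_add (hB x) le_rfl)
  have hKU : ∀ x y, |U x - U y| ≤ K * |x - y| := fun x y => by
    have e : U x - U y = T x - T y := by simp [hU]
    rw [e]; exact hK x y
  have hW := Wd_zero c kc hkc ha hm' hroots hBU hKU hMU
  have hlU : Tendsto U atTop (𝓝 (l - r)) := hl.sub_const r
  -- limit is zero
  have hlim : l - r = 0 := by
    have h1 : Tendsto (fun x => Wd kc (π / (2 * kc)) U x) atTop
        (𝓝 ((l - r) + (l - r) - 2 * Real.cos (π / (2 * kc) * kc) * (l - r))) := by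
      unfold Wd
      exact ((hlU.comp (tendsto_atTop_add_const_right _ _ tendsto_id)).add
        (hlU.comp (tendsto_atTop_add_const_right _ (-(π / (2 * kc))) tendsto_id))).sub (hlU.const_mul _)
    simp_rw [hW] at h1
    have h2 := tendsto_nhds_unique h1 tendsto_const_nhds
    have h3 : Real.cos (π / (2 * kc) * kc) = 0 := by
      have : π / (2 * kc) * kc = π / 2 := by field_simp
      rw [this, Real.cos_pi_div_two]
    rw [h3] at h2
    linarith
  rw [hlim] at hlU
  have hper : ∀ x, U (x + 2 * (π / kc)) = U x := by
    intro x
    have h1 := hW (π / (2 * kc)) (x + π / (2 * kc))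
    have h2 := hW (π / (2 * kc)) (x + 3 * (π / (2 * kc)))
    unfold Wd at h1 h2
    have h3 : Real.cos (π / (2 * kc) * kc) = 0 := by
      have : π / (2 * kc) * kc = π / 2 := by field_simp
      rw [this, Real.cos_pi_div_two]
    rw [h3] at h1 h2
    have e1 : x + 2 * (π / kc) = x + 3 * (π / (2 * kc)) + π / (2 * kc) := by field_simp; ring
    have e2 : x + 3 * (π / (2 * kc)) - π / (2 * kc) = x + π / (2 * kc) + π / (2 * kc) := by ring
    have e3 : x = x + π / (2 * kc) - π / (2 * kc) := by ring
    rw [e2] at h2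
    rw [← e3] at h1
    rw [e1]
    linarith
  have hpern : ∀ (n : ℕ) x, U (x + n * (2 * (π / kc))) = U x := by
    intro n
    induction n with
    | zero => intro x; simp
    | succ n ih =>
      intro x
      have : x + ((n + 1 : ℕ) : ℝ) * (2 * (π / kc)) = (x + n * (2 * (π / kc))) + 2 * (π / kc) := by
        push_cast; ring
      rw [this, hper, ih]
  have hU0 : ∀ x, U x = 0 := by
    intro x
    have hpos : 0 < 2 * (π / kc) := by positivity
    have h1 : Tendsto (fun n : ℕ => x + n * (2 * (π / kc))) atTop atTop :=
      tendsto_atTop_add_const_left _ x (tendsto_natCast_atTop_atTop.atTop_mul_const hpos)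
    have h2 := hlU.comp h1
    have h3 : (U ∘ fun n : ℕ => x + n * (2 * (π / kc))) = fun _ => U x := by
      ext n; exact hpern n x
    rw [h3] at h2
    exact tendsto_nhds_unique tendsto_const_nhds h2
  intro x
  have a := hU0 x
  have b := hU0 0
  simp only [hU] at a b
  linarith

theorem mono_lower {F : ℝ → ℝ} {d x0 : ℝ} (hF : Differentiable ℝ F)
    (h : ∀ x, |x| < x0 → d ≤ deriv F x) (x y : ℝ) (hx : -x0 ≤ x) (hxy : x ≤ y) (hy : y ≤ x0) :
    d * (y - x) ≤ F y - F x := by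
  refine (convex_Icc x y).mul_sub_le_image_sub_of_le_deriv hF.continuous.continuousOn
    hF.differentiableOn ?_ x (Set.left_mem_Icc.2 hxy) y (Set.right_mem_Icc.2 hxy) hxy
  intro z hz
  rw [interior_Icc] at hz
  exact h z (abs_lt.2 ⟨by linarith [hz.1], by linarith [hz.2]⟩)

theorem wave_sign {R : ℝ → ℝ} {x0 r0 d : ℝ} (hR : Differentiable ℝ R) (h0 : R 0 = 0)
    (hx0 : 0 < x0) (hr0 : 0 < r0) (hd : 0 < d)
    (hp : ∀ x, x0 < x → r0 < R x) (hn : ∀ x, x < -x0 → R x < -r0)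
    (h : ∀ x, |x| < x0 → d < deriv R x) (x : ℝ) : Real.sign (R x) = Real.sign x := by
  have hm := mono_lower (x0 := x0) hR (fun x hx => (h x hx).le)
  rcases lt_trichotomy x 0 with hx | hx | hx
  · rw [Real.sign_of_neg hx, Real.sign_of_neg]
    by_cases h1 : x < -x0
    · linarith [hn x h1]
    · have := hm x 0 (by linarith) hx.le hx0.le
      rw [h0] at this
      nlinarith
  · rw [hx, h0]
  · rw [Real.sign_of_pos hx, Real.sign_of_pos]
    by_cases h1 : x0 < x
    · linarith [hp x h1]
    · have := hm 0 x (by linarith) hx.le (by linarith)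
      rw [h0] at this
      nlinarith

theorem sign_meas : Measurable Real.sign := by
  have : Real.sign = fun r : ℝ => if r < 0 then (-1:ℝ) else if 0 < r then 1 else 0 := by
    ext r; rfl
  rw [this]
  exact Measurable.ite measurableSet_Iio measurable_const
    (Measurable.ite measurableSet_Ioi measurable_const measurable_const)

theorem sign_bd (x : ℝ) : |Real.sign x| ≤ 1 := by
  rcases lt_trichotomy x 0 with hx | hx | hx
  · rw [Real.sign_of_neg hx]; norm_num
  · rw [hx, Real.sign_zero]; norm_num
  · rw [Real.sign_of_pos hx]; norm_num

theorem Aop_sign_pos {x : ℝ} (hx : 1/2 < x) : Aop Real.sign x = 1 := by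
  unfold Aop
  rw [intervalIntegral.integral_congr (g := fun _ => (1:ℝ))]
  · rw [intervalIntegral.integral_const]; norm_num
  · intro y hy
    rw [Set.uIcc_of_le (by linarith)] at hy
    exact Real.sign_of_pos (by linarith [hy.1])

theorem lip_real {F : ℝ → ℝ} {K : NNReal} (h : LipschitzWith K F) (x y : ℝ) :
    |F x - F y| ≤ K * |x - y| := by
  have := h.dist_le_mul x y
  rwa [Real.dist_eq, Real.dist_eq] at this

theorem AA_deriv {F F' : ℝ → ℝ} (h : ∀ x, HasDerivAt F (F' x) x) (hc : Continuous F') (x : ℝ) :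
    Aop (Aop F') x = Aop F (x + 1/2) - Aop F (x - 1/2) := by
  have hF : Continuous F := continuous_iff_continuousAt.2 fun x => (h x).continuousAt
  have h1 : Aop F' = fun y => F (y + 1/2) - F (y + (-1/2)) := by
    ext y; rw [Aop_of_deriv h hc]; congr 2; ring
  rw [h1]
  have : Aop (fun y => F (y + 1/2) - F (y + (-1/2))) x = Aop (fun y => F (y + 1/2)) x - Aop (fun y => F (y + (-1/2))) x := by
    unfold Aop
    refine intervalIntegral.integral_sub ?_ ?_ <;> (apply Continuous.intervalIntegrable; fun_prop)
  rw [this, Aop_shift, Aop_shift]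
  congr 2; ring

theorem green_exists (c kc : ℝ) (hc0 : 0 < c) (hkc : 0 < kc)
    (ha : symb kc = c) (hm' : deriv (msymb c) kc ≠ 0)
    (hroots : ∀ k : ℝ, k ≠ kc → k ≠ -kc → msymb c k ≠ 0)
    (R₀ : ℝ → ℝ) (hR₀ : UnperturbedWave c R₀) :
    ∃ (g : ℝ → ℝ) (B L : ℝ), (∀ x, |g x| ≤ B) ∧ (∀ x y, |g x - g y| ≤ L * |x - y|) ∧
      Tendsto g atTop (𝓝 0) ∧
      ∀ x, Mop c g x = (Aop Real.sign (x + 1/2) - Aop Real.sign (x - 1/2)) / 2 := by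
  obtain ⟨⟨hd, ⟨C, hC⟩, K, hK⟩, h0, ⟨μ, hμ⟩, x0, r0, d, hx0, hr0, hd0, hp, hn, hder⟩ := hR₀
  have hs : (fun y => Real.sign (R₀ y)) = Real.sign := by
    ext y; exact wave_sign hd h0 hx0 hr0 hd0 hp hn hder y
  rw [hs] at hμ
  have hKr := lip_real hK
  have hc' : Continuous (deriv R₀) := cont_of_lip hKr
  have hM1 : ∀ x, Mop c (deriv R₀) x = Aop Real.sign (x + 1/2) - Aop Real.sign (x - 1/2) := by
    intro x
    have hR := hd.continuous
    have hAc : Continuous (Aop R₀) := Aop_cont hR.measurable (fun x => (hC x).1)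
    have h1 : HasDerivAt (Mop c R₀) (Aop R₀ (x + 1/2) - Aop R₀ (x - 1/2) - c^2 * deriv R₀ x) x :=
      (Aop_hasDerivAt hAc x).sub ((hd x).hasDerivAt.const_mul (c^2))
    have h2 : HasDerivAt (Mop c R₀) (Aop Real.sign (x + 1/2) - Aop Real.sign (x - 1/2)) x := by
      have : Mop c R₀ = fun x => Aop (Aop Real.sign) x + μ := by ext x; exact hμ x
      rw [this]
      exact (Aop_hasDerivAt (Aop_cont sign_meas sign_bd) x).add_const μ
    rw [← h1.unique h2]
    unfold Mop
    rw [AA_deriv (fun x => (hd x).hasDerivAt) hc']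
  set g0 : ℝ → ℝ := fun x => (1/2) * deriv R₀ x with hg0
  have hM0 : ∀ x, Mop c g0 x = (Aop Real.sign (x + 1/2) - Aop Real.sign (x - 1/2)) / 2 := by
    intro x
    rw [hg0, Mop_smul, hM1]; ring
  have hB0 : ∀ x, |g0 x| ≤ C := by
    intro x
    have := (hC x).2
    rw [hg0]; simp only [abs_mul]; rw [abs_of_pos (by norm_num : (0:ℝ) < 1/2)]
    have := abs_nonneg (deriv R₀ x)
    linarith
  have hL0 : ∀ x y, |g0 x - g0 y| ≤ K * |x - y| := by
    intro x y
    have h1 := hKr x y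
    have : g0 x - g0 y = (1/2) * (deriv R₀ x - deriv R₀ y) := by rw [hg0]; ring
    rw [this, abs_mul, abs_of_pos (by norm_num : (0:ℝ) < 1/2)]
    have := abs_nonneg (deriv R₀ x - deriv R₀ y)
    linarith
  obtain ⟨α, β, hlim⟩ := asymp c kc hc0 hkc ha hm' hroots hB0 hL0 (fun x hx => by
    rw [hM0, Aop_sign_pos (by linarith), Aop_sign_pos (by linarith)]; ring)
  have mulb : ∀ a b : ℝ, |b| ≤ 1 → |a * b| ≤ |a| := fun a b hb => by
    rw [abs_mul]; have := abs_nonneg a; nlinarith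
  have hcb : ∀ x, |α * Real.cos (kc * x)| ≤ |α| := fun x => mulb _ _ (Real.abs_cos_le_one _)
  have hsb : ∀ x, |β * Real.sin (kc * x)| ≤ |β| := fun x => mulb _ _ (Real.abs_sin_le_one _)
  have hg0c : Continuous g0 := cont_of_lip hL0
  have hb1 : ∀ x, |g0 x - α * Real.cos (kc * x)| ≤ C + |α| := fun x =>
    (abs_sub _ _).trans (add_le_add (hB0 x) (hcb x))
  refine ⟨fun x => g0 x - α * Real.cos (kc * x) - β * Real.sin (kc * x), C + |α| + |β|,
    K + |α| * kc + |β| * kc, fun x => (abs_sub _ _).trans (add_le_add (hb1 x) (hsb x)), ?_, hlim, ?_⟩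
  · intro x y
    have e1 := hL0 x y
    have e2 : |Real.cos (kc * x) - Real.cos (kc * y)| ≤ kc * |x - y| := by
      have := Real.abs_cos_sub_cos_le (kc * x) (kc * y)
      rwa [← mul_sub, abs_mul, abs_of_pos hkc] at this
    have e3 : |Real.sin (kc * x) - Real.sin (kc * y)| ≤ kc * |x - y| := by
      have := Real.abs_sin_sub_sin_le (kc * x) (kc * y)
      rwa [← mul_sub, abs_mul, abs_of_pos hkc] at this
    have e : g0 x - α * Real.cos (kc * x) - β * Real.sin (kc * x) - (g0 y - α * Real.cos (kc * y) - β * Real.sin (kc * y))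
      = (g0 x - g0 y) - α * (Real.cos (kc * x) - Real.cos (kc * y)) - β * (Real.sin (kc * x) - Real.sin (kc * y)) := by ring
    rw [e]
    refine (abs_sub _ _).trans ?_
    refine (add_le_add_left (abs_sub _ _) _).trans ?_
    rw [abs_mul, abs_mul]
    have f2 := mul_le_mul_of_nonneg_left e2 (abs_nonneg α)
    have f3 := mul_le_mul_of_nonneg_left e3 (abs_nonneg β)
    linarith
  · intro x
    rw [Mop_sub c (by fun_prop) hb1 (by fun_prop) hsb, Mop_sub c (by fun_prop) hB0 (by fun_prop) hcb,
      hM0, Mop_smul, Mop_smul, Mop_cos hkc ha, Mop_sin hkc ha]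
    ring

noncomputable def Lop (g G : ℝ → ℝ) : ℝ → ℝ := fun x => ∫ y, (g (x - y) - g (-y)) * G y

theorem supp_bound {H : ℝ → ℝ} {r M : ℝ} (hr : 0 ≤ r) (hM : ∀ y, |y| ≤ r → |H y| ≤ M)
    (h0 : ∀ y, r < |y| → H y = 0) : |∫ y, H y| ≤ 2 * r * M := by
  have h1 : ∫ y in Set.Icc (-r) r, H y = ∫ y, H y := by
    apply setIntegral_eq_integral_of_forall_compl_eq_zero
    intro y hy
    apply h0
    by_contra hc
    exact hy (abs_le.1 (not_lt.1 hc))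
  rw [← h1]
  have h2 := norm_setIntegral_le_of_norm_le_const (μ := volume) (s := Set.Icc (-r) r) (f := H) (C := M)
    (by simp) (fun y hy => hM y (abs_le.2 hy))
  rw [Real.norm_eq_abs] at h2
  refine h2.trans (le_of_eq ?_)
  rw [Measure.real, Real.volume_Icc, ENNReal.toReal_ofReal (by linarith)]
  ring

theorem supp_integrable {G : ℝ → ℝ} {r b : ℝ} (hG : Measurable G) (hb : ∀ y, |G y| ≤ b)
    (h0 : ∀ y, r < |y| → G y = 0) : Integrable G := by
  have h1 : IntegrableOn G (Set.Icc (-r) r) :=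
    Measure.integrableOn_of_bounded (M := b) (by simp) hG.aestronglyMeasurable
      (Eventually.of_forall (fun x => hb x))
  have h2 : (Set.Icc (-r) r).indicator G = G := by
    ext y
    by_cases hy : y ∈ Set.Icc (-r) r
    · rw [Set.indicator_of_mem hy]
    · rw [Set.indicator_of_notMem hy, h0]
      by_contra hc
      exact hy (abs_le.1 (not_lt.1 hc))
  rw [← h2]
  exact (integrable_indicator_iff measurableSet_Icc).2 h1

theorem bd_mul_int {f G : ℝ → ℝ} {B : ℝ} (hf : Measurable f) (hB : ∀ y, |f y| ≤ B)
    (hG : Integrable G) : Integrable (fun y => f y * G y) :=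
  hG.bdd_mul hf.aestronglyMeasurable (c := B) (Eventually.of_forall fun y => hB y)

theorem Lop_zero (g G : ℝ → ℝ) : Lop g G 0 = 0 := by
  unfold Lop; simp

section
variable {g : ℝ → ℝ} {B L : ℝ} {G : ℝ → ℝ} {r b : ℝ}

theorem Lop_sub_eq (hB : ∀ x, |g x| ≤ B) (hL : ∀ x y, |g x - g y| ≤ L * |x - y|)
    (hG : Integrable G) (x x' : ℝ) :
    Lop g G x - Lop g G x' = ∫ y, (g (x - y) - g (x' - y)) * G y := by
  have hg : Continuous g := cont_of_lip hL
  have i : ∀ x, Integrable (fun y => (g (x - y) - g (-y)) * G y) := fun x =>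
    bd_mul_int (B := B + B) (by fun_prop) (fun y => (abs_sub _ _).trans (add_le_add (hB _) (hB _))) hG
  unfold Lop
  rw [← integral_sub (i x) (i x')]
  congr 1
  ext y
  ring

theorem lip_nonneg (hL : ∀ x y, |g x - g y| ≤ L * |x - y|) : 0 ≤ L := by
  have := hL 1 0
  norm_num at this
  exact (abs_nonneg _).trans this

theorem Lop_lip (hB : ∀ x, |g x| ≤ B) (hL : ∀ x y, |g x - g y| ≤ L * |x - y|)
    (hr : 0 ≤ r) (hG : Measurable G) (hb : ∀ y, |G y| ≤ b)
    (h0 : ∀ y, r < |y| → G y = 0) (x x' : ℝ) :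
    |Lop g G x - Lop g G x'| ≤ (2 * r * L * b) * |x - x'| := by
  rw [Lop_sub_eq hB hL (supp_integrable hG hb h0)]
  have h1 := supp_bound (H := fun y => (g (x - y) - g (x' - y)) * G y) (M := L * |x - x'| * b) hr ?_ ?_
  · linarith
  · intro y _
    rw [abs_mul]
    have h2 := hL (x - y) (x' - y)
    rw [sub_sub_sub_cancel_right] at h2
    exact mul_le_mul h2 (hb y) (abs_nonneg _) ((abs_nonneg _).trans h2)
  · intro y hy; simp [h0 y hy]

theorem Lop_bound (hB : ∀ x, |g x| ≤ B) (hL : ∀ x y, |g x - g y| ≤ L * |x - y|)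
    (hr : 0 ≤ r) (hG : Measurable G) (hb : ∀ y, |G y| ≤ b)
    (h0 : ∀ y, r < |y| → G y = 0) (x : ℝ) :
    |Lop g G x| ≤ 4 * L * r^2 * b + 2 * B * |∫ y, G y| := by
  have hg : Continuous g := cont_of_lip hL
  have hGi := supp_integrable hG hb h0
  have hL0 := lip_nonneg hL
  have key : ∀ z, |∫ y, (g (z - y) - g z) * G y| ≤ 2 * r * (L * r * b) := by
    intro z
    apply supp_bound hr
    · intro y hy
      rw [abs_mul]
      have h2 := hL (z - y) z
      have h3 : |z - y - z| = |y| := by rw [sub_right_comm, sub_self, zero_sub, abs_neg]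
      rw [h3] at h2
      have h4 : L * |y| ≤ L * r := mul_le_mul_of_nonneg_left hy hL0
      exact mul_le_mul (h2.trans h4) (hb y) (abs_nonneg _) (by positivity)
    · intro y hy; simp [h0 y hy]
  have i : ∀ z w, Integrable (fun y => (g (z - y) - w) * G y) := fun z w =>
    bd_mul_int (B := B + |w|) (by fun_prop) (fun y => (abs_sub _ _).trans (add_le_add (hB _) le_rfl)) hGi
  have e : Lop g G x = (∫ y, (g (x - y) - g x) * G y) - (∫ y, (g (0 - y) - g 0) * G y)
      + (g x - g 0) * ∫ y, G y := by
    unfold Lop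
    rw [← integral_const_mul, ← integral_sub (i _ _) (i _ _), ← integral_add (f := fun y => (g (x - y) - g x) * G y - (g (0 - y) - g 0) * G y)
      (g := fun y => (g x - g 0) * G y) ((i _ _).sub (i _ _)) (hGi.const_mul _)]
    congr 1
    ext y
    rw [zero_sub]
    ring
  rw [e]
  have a1 := key x
  have a2 := key 0
  have a3 : |(g x - g 0) * ∫ y, G y| ≤ 2 * B * |∫ y, G y| := by
    rw [abs_mul]
    apply mul_le_mul_of_nonneg_right _ (abs_nonneg _)
    refine (abs_sub _ _).trans ?_
    linarith [hB x, hB 0]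
  have b1 := abs_add_le ((∫ y, (g (x - y) - g x) * G y) - (∫ y, (g (0 - y) - g 0) * G y)) ((g x - g 0) * ∫ y, G y)
  have b2 := abs_sub (∫ y, (g (x - y) - g x) * G y) (∫ y, (g (0 - y) - g 0) * G y)
  nlinarith

theorem Lop_lim (hB : ∀ x, |g x| ≤ B) (hL : ∀ x y, |g x - g y| ≤ L * |x - y|)
    (ht : Tendsto g atTop (𝓝 0)) (hG : Integrable G) :
    Tendsto (Lop g G) atTop (𝓝 (∫ y, (0 - g (-y)) * G y)) := by
  have hg : Continuous g := cont_of_lip hL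
  unfold Lop
  apply tendsto_integral_filter_of_dominated_convergence (fun y => (B + B) * |G y|)
  · exact Eventually.of_forall fun x =>
      (bd_mul_int (B := B + B) (by fun_prop) (fun y => (abs_sub _ _).trans (add_le_add (hB _) (hB _))) hG).aestronglyMeasurable
  · refine Eventually.of_forall fun x => Eventually.of_forall fun y => ?_
    rw [Real.norm_eq_abs, abs_mul]
    exact mul_le_mul_of_nonneg_right ((abs_sub _ _).trans (add_le_add (hB _) (hB _))) (abs_nonneg _)
  · exact hG.abs.const_mul _
  · refine Eventually.of_forall fun y => ?_
    refine Tendsto.mul_const _ (Tendsto.sub_const ?_ _)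
    exact ht.comp (tendsto_atTop_add_const_right _ (-y) tendsto_id)

noncomputable def iot : ℝ → ℝ := fun z => (1/2) * (Real.sign (z + 1/2) - Real.sign (z + (-1/2)))

theorem iot_meas : Measurable iot := by
  unfold iot
  exact ((sign_meas.comp (measurable_add_const _)).sub (sign_meas.comp (measurable_add_const _))).const_mul _

theorem iot_bd (z : ℝ) : |iot z| ≤ 1 := by
  unfold iot
  rw [abs_mul, abs_of_pos (by norm_num : (0:ℝ) < 1/2)]
  have := abs_sub (Real.sign (z + 1/2)) (Real.sign (z + (-1/2)))
  have := sign_bd (z + 1/2)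
  have := sign_bd (z + (-1/2))
  linarith

theorem Aop_iot (x : ℝ) : Aop iot x = (Aop Real.sign (x + 1/2) - Aop Real.sign (x - 1/2)) / 2 := by
  unfold iot
  rw [Aop_smul, Aop_sub (F := fun z => Real.sign (z + 1/2)) (G := fun z => Real.sign (z + (-1/2)))
    (sign_meas.comp (measurable_add_const _)) (fun _ => sign_bd _)
    (sign_meas.comp (measurable_add_const _)) (fun _ => sign_bd _), Aop_shift, Aop_shift]
  have : x + (-1/2) = x - 1/2 := by ring
  rw [this]; ring

theorem Aop_as_conv (G : ℝ → ℝ) (z : ℝ) : Aop G z = ∫ y, iot (z - y) * G y := by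
  unfold Aop
  rw [intervalIntegral.integral_of_le (by linarith), ← integral_indicator measurableSet_Ioc]
  apply integral_congr_ae
  have h1 : ∀ᵐ y : ℝ, y ≠ z - 1/2 := by simp [ae_iff]
  have h2 : ∀ᵐ y : ℝ, y ≠ z + 1/2 := by simp [ae_iff]
  filter_upwards [h1, h2] with y hy1 hy2
  unfold iot
  rcases lt_or_gt_of_ne hy1 with h | h
  · rw [Set.indicator_of_notMem (by simp only [Set.mem_Ioc, not_and]; intro; linarith),
      Real.sign_of_pos (by linarith), Real.sign_of_pos (by linarith)]; ring
  rcases lt_or_gt_of_ne hy2 with h' | h'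
  · rw [Set.indicator_of_mem (Set.mem_Ioc.2 ⟨h, h'.le⟩),
      Real.sign_of_pos (by linarith), Real.sign_of_neg (by linarith)]; ring
  · rw [Set.indicator_of_notMem (by simp only [Set.mem_Ioc, not_and]; intro; linarith),
      Real.sign_of_neg (by linarith), Real.sign_of_neg (by linarith)]; ring

theorem Lop_M {c : ℝ} (hB : ∀ x, |g x| ≤ B) (hL : ∀ x y, |g x - g y| ≤ L * |x - y|)
    (hM : ∀ x, Mop c g x = (Aop Real.sign (x + 1/2) - Aop Real.sign (x - 1/2)) / 2)
    (hG : Integrable G) (x : ℝ) :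
    Mop c (Lop g G) x = Aop (Aop G) x + (-((1 - c^2) * ∫ y, g (-y) * G y)) := by
  have hg : Continuous g := cont_of_lip hL
  have i : ∀ z, Integrable (fun y => g (z - y) * G y) := fun z =>
    bd_mul_int (B := B) (by fun_prop) (fun y => hB _) hG
  have i0 : Integrable (fun y => g (- y) * G y) :=
    bd_mul_int (B := B) (by fun_prop) (fun y => hB _) hG
  set P : ℝ → ℝ := fun z => ∫ y, g (z - y) * G y with hP
  have e : Lop g G = fun z => P z - ∫ y, g (-y) * G y := by
    ext z
    unfold Lop
    rw [hP, ← integral_sub (i z) i0]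
    congr 1; ext y; ring
  have hAg : Continuous (Aop g) := Aop_cont hg.measurable hB
  have hPb : ∀ z, |P z| ≤ ∫ y, B * |G y| := by
    intro z
    refine (abs_integral_le_integral_abs).trans ?_
    apply integral_mono (i z).abs (hG.abs.const_mul _)
    intro y
    simp only [abs_mul]
    exact mul_le_mul_of_nonneg_right (hB _) (abs_nonneg _)
  have hPm : Measurable P := by
    have : P = fun z => Lop g G z + ∫ y, g (-y) * G y := by rw [e]; ext z; ring
    have hc : Continuous P := by
      rw [hP]
      apply continuous_of_dominated (bound := fun y => B * |G y|)
      · exact fun x => (i x).aestronglyMeasurable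
      · refine fun x => Eventually.of_forall fun y => ?_
        rw [Real.norm_eq_abs, abs_mul]
        exact mul_le_mul_of_nonneg_right (hB _) (abs_nonneg _)
      · exact hG.abs.const_mul _
      · exact Eventually.of_forall fun y => by fun_prop
    exact hc.measurable
  have hMP : Mop c P x = Aop (Aop G) x := by
    have a1 : Aop P = fun z => ∫ y, Aop g (z - y) * G y := by
      ext z; exact Aop_conv hg.measurable hB hG z
    have a2 : Aop (Aop P) x = ∫ y, Aop (Aop g) (x - y) * G y := by
      rw [a1]; exact Aop_conv hAg.measurable (Aop_bound hB) hG x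
    have a3 : Aop G = fun z => ∫ y, iot (z - y) * G y := by
      ext z; exact Aop_as_conv G z
    have a4 : Aop (Aop G) x = ∫ y, Aop iot (x - y) * G y := by
      rw [a3]; exact Aop_conv iot_meas iot_bd hG x
    have hAA : Continuous (Aop (Aop g)) := Aop_cont hAg.measurable (Aop_bound hB)
    have i2 : Integrable (fun y => Aop (Aop g) (x - y) * G y) :=
      bd_mul_int (B := B) (by fun_prop) (fun y => Aop_bound (Aop_bound hB) _) hG
    rw [a4]
    unfold Mop
    rw [a2, hP]
    simp only
    rw [← integral_const_mul, ← integral_sub i2 ((i x).const_mul _)]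
    congr 1
    ext y
    rw [Aop_iot, ← hM]
    unfold Mop
    ring
  rw [e, Mop_sub c hPm hPb measurable_const (fun _ => le_rfl), hMP, Mop_const]
  ring
end

/-- regularity from the equation -/
theorem sol_deriv {c : ℝ} (hc0 : 0 < c) {S G : ℝ → ℝ} {s b η : ℝ} (hS : Continuous S)
    (hs : ∀ x, |S x| ≤ s) (hG : Measurable G) (hb : ∀ y, |G y| ≤ b)
    (hM : ∀ x, Mop c S x = Aop (Aop G) x + η) :
    Differentiable ℝ S ∧ ∀ x y, |deriv S x - deriv S y| ≤ (4 * s + 4 * b) / c^2 * |x - y| := by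
  have hAS := Aop_cont hS.measurable hs
  have hAG := Aop_cont hG hb
  have hc2 : (c^2) ≠ 0 := by positivity
  have e : S = fun x => (Aop (Aop S) x - Aop (Aop G) x - η) / c^2 := by
    ext x
    have := hM x
    unfold Mop at this
    field_simp
    linarith
  have hd : ∀ x, HasDerivAt S ((Aop S (x + 1/2) - Aop S (x - 1/2) - (Aop G (x + 1/2) - Aop G (x - 1/2))) / c^2) x := by
    intro x
    have h1 := (((Aop_hasDerivAt hAS x).sub (Aop_hasDerivAt hAG x)).sub_const η).div_const (c^2)
    exact h1.congr_of_eventuallyEq (Eventually.of_forall fun z => congrFun e z)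
  refine ⟨fun x => (hd x).differentiableAt, fun x y => ?_⟩
  rw [(hd x).deriv, (hd y).deriv]
  have a1 := Aop_lip hS.measurable hs (x + 1/2) (y + 1/2)
  have a2 := Aop_lip hS.measurable hs (x - 1/2) (y - 1/2)
  have a3 := Aop_lip hG hb (x + 1/2) (y + 1/2)
  have a4 := Aop_lip hG hb (x - 1/2) (y - 1/2)
  rw [add_sub_add_right_eq_sub] at a1 a3
  rw [sub_sub_sub_cancel_right] at a2 a4
  rw [← sub_div, abs_div, abs_of_pos (by positivity : 0 < c^2), div_mul_eq_mul_div]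
  apply div_le_div_of_nonneg_right _ (by positivity)
  rw [abs_le] at *
  constructor <;> linarith [a1.1, a1.2, a2.1, a2.2, a3.1, a3.2, a4.1, a4.2]

noncomputable def Gp (p R S : ℝ → ℝ) : ℝ → ℝ := fun x => p (R x + S x) - Real.sign (R x)

structure Ctx (c : ℝ) (g p R : ℝ → ℝ) (B L Cp K0 x0 r0 d ρ δ C0 C1 : ℝ) : Prop where
  hc0 : 0 < c
  hB : ∀ x, |g x| ≤ B
  hL : ∀ x y, |g x - g y| ≤ L * |x - y|
  ht : Tendsto g atTop (𝓝 0)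
  hM : ∀ x, Mop c g x = (Aop Real.sign (x + 1/2) - Aop Real.sign (x - 1/2)) / 2
  hp1 : ∀ r, δ ≤ |r| → p r = Real.sign r
  hp2 : ∀ r, |p r| ≤ Cp
  hp3 : ∀ r s, |p r - p s| ≤ Cp / δ * |r - s|
  hpI : ∫ r, (p r - Real.sign r) = 0
  hR : Differentiable ℝ R
  hR0 : R 0 = 0
  hRp : ∀ x, x0 < x → r0 < R x
  hRn : ∀ x, x < -x0 → R x < -r0
  hRd : ∀ x, |x| < x0 → d < deriv R x
  hK : ∀ x y, |deriv R x - deriv R y| ≤ K0 * |x - y|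
  hδ : 0 < δ
  hd : 0 < d
  hx0 : 0 < x0
  hr0 : 0 < r0
  hC0 : 0 ≤ C0
  hC1 : 0 ≤ C1
  hρ0 : 0 < ρ
  hρ : ρ * d = 2
  s1 : C1 * δ ≤ d / 8
  s2 : C0 * δ^2 ≤ r0 / 2
  s3 : δ < r0 / 2
  s4 : ρ * δ < x0
  s5 : 2 * ρ * L * (Cp + 1) ≤ C1
  s6 : 4 * L * ρ^2 * (Cp + 1) + 2 * B * (2 * ρ^2 * Cp * (K0 * ρ + C1)) ≤ C0
  s7 : 4 * L * ρ^2 * Cp * δ ≤ 1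
  s8 : C0 * δ^2 ≤ 1
  s9 : K0 * (ρ * δ) ≤ d / 8

structure InBall (δ C0 C1 : ℝ) (S : ℝ → ℝ) : Prop where
  hd : Differentiable ℝ S
  h0 : S 0 = 0
  hb : ∀ x, |S x| ≤ C0 * δ^2
  hb' : ∀ x, |deriv S x| ≤ C1 * δ

namespace Ctx
variable {c : ℝ} {g p R : ℝ → ℝ} {B L Cp K0 x0 r0 d ρ δ C0 C1 : ℝ}

theorem Cp0 (H : Ctx c g p R B L Cp K0 x0 r0 d ρ δ C0 C1) : 0 ≤ Cp :=
  (abs_nonneg _).trans (H.hp2 0)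

theorem B0 (H : Ctx c g p R B L Cp K0 x0 r0 d ρ δ C0 C1) : 0 ≤ B :=
  (abs_nonneg _).trans (H.hB 0)

theorem sgnR (H : Ctx c g p R B L Cp K0 x0 r0 d ρ δ C0 C1) (x : ℝ) :
    Real.sign (R x) = Real.sign x :=
  wave_sign H.hR H.hR0 H.hx0 H.hr0 H.hd H.hRp H.hRn H.hRd x

theorem F_lower (H : Ctx c g p R B L Cp K0 x0 r0 d ρ δ C0 C1) {S : ℝ → ℝ}
    (hS : InBall δ C0 C1 S) (x y : ℝ) (hx : -x0 ≤ x) (hxy : x ≤ y) (hy : y ≤ x0) :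
    d / 2 * (y - x) ≤ (R y + S y) - (R x + S x) := by
  refine mono_lower (F := fun x => R x + S x) (x0 := x0) (H.hR.add hS.hd) ?_ x y hx hxy hy
  intro z hz
  rw [deriv_fun_add (H.hR z) (hS.hd z)]
  have h1 := H.hRd z hz
  have h2 := abs_le.1 (hS.hb' z)
  have h3 := H.s1
  have h4 := H.hd
  linarith [h2.1]

theorem F_zero (H : Ctx c g p R B L Cp K0 x0 r0 d ρ δ C0 C1) {S : ℝ → ℝ}
    (hS : InBall δ C0 C1 S) : R 0 + S 0 = 0 := by rw [H.hR0, hS.h0, add_zero]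

theorem F_far (H : Ctx c g p R B L Cp K0 x0 r0 d ρ δ C0 C1) {S : ℝ → ℝ}
    (hS : InBall δ C0 C1 S) (x : ℝ) (hx : x0 < x) : δ < R x + S x := by
  have h1 := H.hRp x hx
  have h2 := abs_le.1 (hS.hb x)
  linarith [h2.1, H.s2, H.s3]

theorem F_far' (H : Ctx c g p R B L Cp K0 x0 r0 d ρ δ C0 C1) {S : ℝ → ℝ}
    (hS : InBall δ C0 C1 S) (x : ℝ) (hx : x < -x0) : R x + S x < -δ := by
  have h1 := H.hRn x hx
  have h2 := abs_le.1 (hS.hb x)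
  linarith [h2.2, H.s2, H.s3]

theorem F_pos (H : Ctx c g p R B L Cp K0 x0 r0 d ρ δ C0 C1) {S : ℝ → ℝ}
    (hS : InBall δ C0 C1 S) (x : ℝ) (hx : ρ * δ ≤ x) : δ ≤ R x + S x := by
  have hρδ : 0 < ρ * δ := mul_pos H.hρ0 H.hδ
  by_cases h : x0 < x
  · exact (H.F_far hS x h).le
  · have h1 := H.F_lower hS 0 x (by linarith [H.hx0]) (by linarith) (by linarith)
    rw [H.F_zero hS] at h1
    have h2 : d / 2 * (ρ * δ) ≤ d / 2 * x := mul_le_mul_of_nonneg_left hx (by linarith [H.hd])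
    have h3 : d / 2 * (ρ * δ) = δ := by linear_combination (δ/2) * H.hρ
    linarith

theorem F_neg (H : Ctx c g p R B L Cp K0 x0 r0 d ρ δ C0 C1) {S : ℝ → ℝ}
    (hS : InBall δ C0 C1 S) (x : ℝ) (hx : x ≤ -(ρ * δ)) : R x + S x ≤ -δ := by
  have hρδ : 0 < ρ * δ := mul_pos H.hρ0 H.hδ
  by_cases h : x < -x0
  · exact (H.F_far' hS x h).le
  · have h1 := H.F_lower hS x 0 (by linarith) (by linarith) (by linarith [H.hx0])
    rw [H.F_zero hS] at h1
    have h2 : d / 2 * (ρ * δ) ≤ d / 2 * (0 - x) := mul_le_mul_of_nonneg_left (by linarith) (by linarith [H.hd])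
    have h3 : d / 2 * (ρ * δ) = δ := by linear_combination (δ/2) * H.hρ
    linarith

theorem G_supp (H : Ctx c g p R B L Cp K0 x0 r0 d ρ δ C0 C1) {S : ℝ → ℝ}
    (hS : InBall δ C0 C1 S) (x : ℝ) (hx : ρ * δ < |x|) : Gp p R S x = 0 := by
  have hρδ : 0 < ρ * δ := mul_pos H.hρ0 H.hδ
  have hδ := H.hδ
  unfold Gp
  rw [H.sgnR]
  rcases lt_abs.1 hx with h | h
  · have h1 := H.F_pos hS x h.le
    rw [H.hp1 _ (h1.trans (le_abs_self _)), Real.sign_of_pos (by linarith), Real.sign_of_pos (by linarith)]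
    ring
  · have h1 := H.F_neg hS x (by linarith)
    rw [H.hp1 _ (le_trans (by linarith) (neg_le_abs _)), Real.sign_of_neg (by linarith), Real.sign_of_neg (by linarith)]
    ring

theorem p_cont (H : Ctx c g p R B L Cp K0 x0 r0 d ρ δ C0 C1) : Continuous p := cont_of_lip H.hp3

theorem G_meas (H : Ctx c g p R B L Cp K0 x0 r0 d ρ δ C0 C1) {S : ℝ → ℝ}
    (hS : Continuous S) : Measurable (Gp p R S) := by
  unfold Gp
  have h1 := H.p_cont
  have h2 := H.hR.continuous
  exact (Continuous.measurable (by fun_prop)).sub (sign_meas.comp h2.measurable)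

theorem G_bd (H : Ctx c g p R B L Cp K0 x0 r0 d ρ δ C0 C1) (S : ℝ → ℝ) (x : ℝ) :
    |Gp p R S x| ≤ Cp + 1 :=
  (abs_sub _ _).trans (add_le_add (H.hp2 _) (sign_bd _))

theorem F_lin (H : Ctx c g p R B L Cp K0 x0 r0 d ρ δ C0 C1) {S : ℝ → ℝ}
    (hS : InBall δ C0 C1 S) (x : ℝ) (hx : |x| ≤ ρ * δ) :
    |R x + S x - deriv R 0 * x| ≤ (K0 * (ρ * δ) + C1 * δ) * (ρ * δ) := by
  have hρδ : 0 < ρ * δ := mul_pos H.hρ0 H.hδ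
  have hK0 : 0 ≤ K0 := lip_nonneg H.hK
  have hC1 := H.hC1
  have hδ := H.hδ
  have hd : ∀ z, HasDerivAt (fun z => R z + S z - deriv R 0 * z) (deriv R z + deriv S z - deriv R 0 * 1) z :=
    fun z => ((H.hR z).hasDerivAt.add (hS.hd z).hasDerivAt).sub ((hasDerivAt_id z).const_mul _)
  have h1 := (convex_Icc (-(ρ * δ)) (ρ * δ)).norm_image_sub_le_of_norm_hasDerivWithin_le
    (C := K0 * (ρ * δ) + C1 * δ) (fun z _ => (hd z).hasDerivWithinAt) (fun z hz => by
      have a1 := H.hK z 0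
      have a2 := hS.hb' z
      have a3 : K0 * |z - 0| ≤ K0 * (ρ * δ) := by
        apply mul_le_mul_of_nonneg_left _ hK0
        rw [sub_zero]; exact abs_le.2 hz
      rw [Real.norm_eq_abs]
      have e : deriv R z + deriv S z - deriv R 0 * 1 = (deriv R z - deriv R 0) + deriv S z := by ring
      rw [e]
      exact (abs_add_le _ _).trans (by linarith))
    (x := 0) (y := x) ⟨by linarith, by linarith⟩ (abs_le.1 hx)
  simp only [H.F_zero hS, Real.norm_eq_abs, mul_zero, sub_zero] at h1
  refine h1.trans ?_
  gcongr

theorem G_mean (H : Ctx c g p R B L Cp K0 x0 r0 d ρ δ C0 C1) {S : ℝ → ℝ}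
    (hS : InBall δ C0 C1 S) : |∫ x, Gp p R S x| ≤ 2 * ρ^2 * Cp * (K0 * ρ + C1) * δ^2 := by
  have hρδ : 0 < ρ * δ := mul_pos H.hρ0 H.hδ
  have hδ := H.hδ
  have hlam : d < deriv R 0 := H.hRd 0 (by simpa using H.hx0)
  have hlp : 0 < deriv R 0 := H.hd.trans hlam
  set l := deriv R 0 with hl
  have hsl : ∀ x, Real.sign (l * x) = Real.sign x := by
    intro x
    rcases lt_trichotomy x 0 with hx | hx | hx
    · rw [Real.sign_of_neg hx, Real.sign_of_neg (mul_neg_of_pos_of_neg hlp hx)]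
    · rw [hx, mul_zero]
    · rw [Real.sign_of_pos hx, Real.sign_of_pos (mul_pos hlp hx)]
  set Q : ℝ → ℝ := fun x => p (l * x) - Real.sign x with hQ
  have hQI : ∫ x, Q x = 0 := by
    have h1 := Measure.integral_comp_mul_left (fun r => p r - Real.sign r) l
    rw [H.hpI] at h1
    simp only [hsl, smul_zero] at h1
    exact h1
  have hpl : ∀ x, ρ * δ < |x| → p (l * x) = Real.sign x := by
    intro x hx
    rw [H.hp1, hsl]
    rw [abs_mul, abs_of_pos hlp]
    have : d * (ρ * δ) ≤ l * |x| := mul_le_mul hlam.le hx.le hρδ.le hlp.le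
    have : d * (ρ * δ) = 2 * δ := by linear_combination δ * H.hρ
    linarith
  have hQs : ∀ x, ρ * δ < |x| → Q x = 0 := fun x hx => by rw [hQ]; simp only [hpl x hx, sub_self]
  have hpc := H.p_cont
  have hQm : Measurable Q := (Continuous.measurable (by fun_prop)).sub sign_meas
  have hQi := supp_integrable hQm (b := Cp + 1) (fun x => (abs_sub _ _).trans (add_le_add (H.hp2 _) (sign_bd _))) hQs
  have hGi := supp_integrable (H.G_meas hS.hd.continuous) (H.G_bd S) (H.G_supp hS)
  have e : ∫ x, Gp p R S x = ∫ x, (Gp p R S x - Q x) := by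
    rw [integral_sub hGi hQi, hQI, sub_zero]
  rw [e]
  have h1 := supp_bound (H := fun x => Gp p R S x - Q x) (r := ρ * δ)
    (M := Cp / δ * ((K0 * (ρ * δ) + C1 * δ) * (ρ * δ))) hρδ.le ?_ ?_
  · refine h1.trans (le_of_eq ?_)
    field_simp
  · intro y hy
    have e1 : Gp p R S y - Q y = p (R y + S y) - p (l * y) := by
      unfold Gp
      rw [H.sgnR]
      simp only [hQ]
      ring
    rw [e1]
    refine (H.hp3 _ _).trans ?_
    apply mul_le_mul_of_nonneg_left (H.F_lin hS y hy)
    exact div_nonneg H.Cp0 hδ.le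
  · intro y hy
    rw [H.G_supp hS y hy, hQs y hy, sub_zero]

theorem T_bd (H : Ctx c g p R B L Cp K0 x0 r0 d ρ δ C0 C1) {S : ℝ → ℝ}
    (hS : InBall δ C0 C1 S) (x : ℝ) : |Lop g (Gp p R S) x| ≤ C0 * δ^2 := by
  have hρδ : 0 < ρ * δ := mul_pos H.hρ0 H.hδ
  have h1 := Lop_bound H.hB H.hL hρδ.le (H.G_meas hS.hd.continuous) (H.G_bd S) (H.G_supp hS) x
  have h2 := mul_le_mul_of_nonneg_left (H.G_mean hS) (by linarith [H.B0] : 0 ≤ 2 * B)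
  have h3 := mul_le_mul_of_nonneg_right H.s6 (sq_nonneg δ)
  nlinarith

theorem T_lip (H : Ctx c g p R B L Cp K0 x0 r0 d ρ δ C0 C1) {S : ℝ → ℝ}
    (hS : InBall δ C0 C1 S) (x y : ℝ) :
    |Lop g (Gp p R S) x - Lop g (Gp p R S) y| ≤ (C1 * δ) * |x - y| := by
  have hρδ : 0 < ρ * δ := mul_pos H.hρ0 H.hδ
  have h1 := Lop_lip H.hB H.hL hρδ.le (H.G_meas hS.hd.continuous) (H.G_bd S) (H.G_supp hS) x y
  refine h1.trans ?_
  apply mul_le_mul_of_nonneg_right _ (abs_nonneg _)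
  have h3 := mul_le_mul_of_nonneg_right H.s5 H.hδ.le
  linarith

theorem T_eq (H : Ctx c g p R B L Cp K0 x0 r0 d ρ δ C0 C1) {S : ℝ → ℝ}
    (hS : InBall δ C0 C1 S) : ∃ η, ∀ x,
    Mop c (Lop g (Gp p R S)) x = Aop (Aop (Gp p R S)) x + η :=
  ⟨_, Lop_M H.hB H.hL H.hM (supp_integrable (H.G_meas hS.hd.continuous) (H.G_bd S) (H.G_supp hS))⟩

theorem T_reg (H : Ctx c g p R B L Cp K0 x0 r0 d ρ δ C0 C1) {S : ℝ → ℝ}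
    (hS : InBall δ C0 C1 S) : Differentiable ℝ (Lop g (Gp p R S)) ∧
    ∀ x y, |deriv (Lop g (Gp p R S)) x - deriv (Lop g (Gp p R S)) y| ≤ (4 + 4 * (Cp + 1)) / c^2 * |x - y| := by
  obtain ⟨η, hη⟩ := H.T_eq hS
  have h1 := sol_deriv H.hc0 (cont_of_lip (H.T_lip hS)) (fun x => (H.T_bd hS x).trans H.s8)
    (H.G_meas hS.hd.continuous) (H.G_bd S) hη
  simpa using h1

theorem deriv_le_of_lip {f : ℝ → ℝ} {K : ℝ} (h : ∀ x y, |f x - f y| ≤ K * |x - y|) (x : ℝ) :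
    |deriv f x| ≤ K := by
  have hK := lip_nonneg h
  have : LipschitzWith ⟨K, hK⟩ f := LipschitzWith.of_dist_le_mul (fun x y => by
    rw [Real.dist_eq, Real.dist_eq]; exact h x y)
  exact norm_deriv_le_of_lipschitz this

theorem T_ball (H : Ctx c g p R B L Cp K0 x0 r0 d ρ δ C0 C1) {S : ℝ → ℝ}
    (hS : InBall δ C0 C1 S) : InBall δ C0 C1 (Lop g (Gp p R S)) :=
  ⟨(H.T_reg hS).1, Lop_zero _ _, H.T_bd hS, deriv_le_of_lip (H.T_lip hS)⟩

theorem T_contr (H : Ctx c g p R B L Cp K0 x0 r0 d ρ δ C0 C1) {S S' : ℝ → ℝ}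
    (hS : InBall δ C0 C1 S) (hS' : InBall δ C0 C1 S') {D : ℝ}
    (hD : ∀ x, |deriv S x - deriv S' x| ≤ D) (x : ℝ) :
    |deriv (Lop g (Gp p R S)) x - deriv (Lop g (Gp p R S')) x| ≤ D / 2 := by
  have hρδ : 0 < ρ * δ := mul_pos H.hρ0 H.hδ
  have hδ := H.hδ
  have hρ0 := H.hρ0
  have hCp := H.Cp0
  have hD0 : 0 ≤ D := (abs_nonneg _).trans (hD 0)
  have hL0 := lip_nonneg H.hL
  have hGi := supp_integrable (H.G_meas hS.hd.continuous) (H.G_bd S) (H.G_supp hS)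
  have hGi' := supp_integrable (H.G_meas hS'.hd.continuous) (H.G_bd S') (H.G_supp hS')
  have hg : Continuous g := cont_of_lip H.hL
  have e : Lop g (fun y => Gp p R S y - Gp p R S' y) = fun z => Lop g (Gp p R S) z - Lop g (Gp p R S') z := by
    ext z
    unfold Lop
    have i : ∀ {G : ℝ → ℝ}, Integrable G → Integrable (fun y => (g (z - y) - g (-y)) * G y) := fun hG =>
      bd_mul_int (B := B + B) (by fun_prop) (fun y => (abs_sub _ _).trans (add_le_add (H.hB _) (H.hB _))) hG
    rw [← integral_sub (i hGi) (i hGi')]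
    congr 1; ext y; ring
  have hdiff : ∀ y, |S y - S' y| ≤ D * |y| := by
    intro y
    have h1 := convex_univ.norm_image_sub_le_of_norm_hasDerivWithin_le (f := fun y => S y - S' y)
      (C := D) (fun z _ => ((hS.hd z).hasDerivAt.sub (hS'.hd z).hasDerivAt).hasDerivWithinAt)
      (fun z _ => hD z) (Set.mem_univ 0) (Set.mem_univ y)
    simpa [hS.h0, hS'.h0] using h1
  have hGb : ∀ y, |Gp p R S y - Gp p R S' y| ≤ Cp * ρ * D := by
    intro y
    by_cases hy : ρ * δ < |y|
    · rw [H.G_supp hS y hy, H.G_supp hS' y hy]; simp; positivity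
    · have e1 : Gp p R S y - Gp p R S' y = p (R y + S y) - p (R y + S' y) := by unfold Gp; ring
      rw [e1]
      refine (H.hp3 _ _).trans ?_
      rw [add_sub_add_left_eq_sub]
      have h1 := hdiff y
      have h2 : D * |y| ≤ D * (ρ * δ) := mul_le_mul_of_nonneg_left (not_lt.1 hy) hD0
      calc Cp / δ * |S y - S' y| ≤ Cp / δ * (D * (ρ * δ)) := by gcongr; linarith
        _ = Cp * ρ * D := by field_simp
  have hlip := Lop_lip H.hB H.hL hρδ.le (G := fun y => Gp p R S y - Gp p R S' y)
    ((H.G_meas hS.hd.continuous).sub (H.G_meas hS'.hd.continuous)) hGb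
    (fun y hy => by rw [H.G_supp hS y hy, H.G_supp hS' y hy, sub_zero])
  have h1 := deriv_le_of_lip hlip x
  rw [e, deriv_fun_sub ((H.T_reg hS).1 x) ((H.T_reg hS').1 x)] at h1
  refine h1.trans ?_
  have h2 := mul_le_mul_of_nonneg_right H.s7 hD0
  nlinarith

/-- any solution in the ball is a fixed point -/
theorem fixed_of_sol (H : Ctx c g p R B L Cp K0 x0 r0 d ρ δ C0 C1) {kc : ℝ} (hc1 : c < 1) (hkc : 0 < kc)
    (ha : symb kc = c) (hm' : deriv (msymb c) kc ≠ 0)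
    (hroots : ∀ k : ℝ, k ≠ kc → k ≠ -kc → msymb c k ≠ 0) {S : ℝ → ℝ} {l η : ℝ}
    (hS : InBall δ C0 C1 S) (hl : Tendsto S atTop (𝓝 l))
    (hM : ∀ x, Mop c S x = Aop (Aop (Gp p R S)) x + η) : Lop g (Gp p R S) = S := by
  obtain ⟨eta2, heta2⟩ := H.T_eq hS
  have hT := H.T_ball hS
  have hlim := Lop_lim H.hB H.hL H.ht (supp_integrable (H.G_meas hS.hd.continuous) (H.G_bd S) (H.G_supp hS))
  have hSl : ∀ x y, |S x - S y| ≤ (C1 * δ) * |x - y| := by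
    intro x y
    have h1 := convex_univ.norm_image_sub_le_of_norm_deriv_le (f := S)
      (C := C1 * δ) (fun z _ => hS.hd z)
      (fun z _ => hS.hb' z) (Set.mem_univ y) (Set.mem_univ x)
    simpa using h1
  have h := hom_unique c kc H.hc0 hc1 hkc ha hm' hroots
    (T := fun x => Lop g (Gp p R S) x - S x) (B := C0 * δ^2 + C0 * δ^2) (K := C1 * δ + C1 * δ)
    (η := eta2 - η) (fun x => (abs_sub _ _).trans (add_le_add (hT.hb x) (hS.hb x)))
    (fun x y => by
      have a1 := H.T_lip hS x y
      have a2 := hSl x y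
      have e : Lop g (Gp p R S) x - S x - (Lop g (Gp p R S) y - S y) =
        (Lop g (Gp p R S) x - Lop g (Gp p R S) y) - (S x - S y) := by ring
      rw [e]
      exact (abs_sub _ _).trans (by linarith))
    (fun x => by
      rw [Mop_sub c hT.hd.continuous.measurable hT.hb hS.hd.continuous.measurable hS.hb, heta2, hM]
      ring)
    (hlim.sub hl) (by simp [hT.h0, hS.h0])
  ext x
  linarith [h x]

theorem fixed_unique (H : Ctx c g p R B L Cp K0 x0 r0 d ρ δ C0 C1) {S S' : ℝ → ℝ}
    (hS : InBall δ C0 C1 S) (hS' : InBall δ C0 C1 S') (h : Lop g (Gp p R S) = S)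
    (h' : Lop g (Gp p R S') = S') : S' = S := by
  have hbd : BddAbove (Set.range fun x => |deriv S x - deriv S' x|) := by
    refine ⟨C1 * δ + C1 * δ, ?_⟩
    rintro _ ⟨x, rfl⟩
    exact (abs_sub _ _).trans (add_le_add (hS.hb' x) (hS'.hb' x))
  have h1 : ∀ x, |deriv S x - deriv S' x| ≤ ⨆ x, |deriv S x - deriv S' x| := fun x => le_ciSup hbd x
  have h2 := H.T_contr hS hS' h1
  rw [h, h'] at h2
  have h3 := ciSup_le h2
  have h4 : ∀ x, deriv S x - deriv S' x = 0 := fun x => by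
    have a := h1 x
    have b := abs_nonneg (deriv S x - deriv S' x)
    exact abs_eq_zero.1 (by linarith)
  have h5 := is_const_of_deriv_eq_zero (f := fun x => S' x - S x) (hS'.hd.sub hS.hd) (fun x => by
    rw [deriv_fun_sub (hS'.hd x) (hS.hd x)]
    linarith [h4 x])
  ext x
  have := h5 x 0
  simp only [hS.h0, hS'.h0] at this
  linarith

theorem admissible (H : Ctx c g p R B L Cp K0 x0 r0 d ρ δ C0 C1) {S : ℝ → ℝ}
    (hS : InBall δ C0 C1 S) (hW : IsW2inf S) : Admissible δ R S := by
  have hρδ : 0 < ρ * δ := mul_pos H.hρ0 H.hδ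
  have hδ := H.hδ
  have hFc : Continuous fun x => R x + S x := H.hR.continuous.add hS.hd.continuous
  obtain ⟨xp, hxp, hxpe⟩ := intermediate_value_Icc hρδ.le hFc.continuousOn
    (show δ ∈ Set.Icc (R 0 + S 0) (R (ρ * δ) + S (ρ * δ)) from
      ⟨by rw [H.F_zero hS]; exact hδ.le, H.F_pos hS _ le_rfl⟩)
  obtain ⟨xm, hxm, hxme⟩ := intermediate_value_Icc (by linarith : -(ρ * δ) ≤ 0) hFc.continuousOn
    (show -δ ∈ Set.Icc (R (-(ρ * δ)) + S (-(ρ * δ))) (R 0 + S 0) from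
      ⟨H.F_neg hS _ le_rfl, by rw [H.F_zero hS]; linarith⟩)
  simp only at hxpe hxme
  have hd := H.hd
  have s4 := H.s4
  refine ⟨hW, hS.h0, xm, xp, ?_, ?_, hxme, hxpe, ?_, ?_, ?_⟩
  · refine lt_of_le_of_ne hxm.2 ?_
    rintro rfl
    rw [H.F_zero hS] at hxme
    linarith
  · refine lt_of_le_of_ne hxp.1 ?_
    rintro rfl
    rw [H.F_zero hS] at hxpe
    linarith
  · intro x hx
    by_cases h : x < -x0
    · exact H.F_far' hS x h
    · have h1 := H.F_lower hS x xm (by linarith) hx.le (by linarith [hxm.2, H.hx0])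
      rw [hxme] at h1
      nlinarith
  · intro x hx
    by_cases h : x0 < x
    · exact H.F_far hS x h
    · have h1 := H.F_lower hS xp x (by linarith [hxp.1, H.hx0]) hx.le (by linarith)
      rw [hxpe] at h1
      nlinarith
  · intro x h1 h2
    have hlam : d < deriv R 0 := H.hRd 0 (by simpa using H.hx0)
    have a1 := H.hK x 0
    have a2 := abs_le.1 (hS.hb' x)
    have hx : |x| ≤ ρ * δ := abs_le.2 ⟨by linarith [hxm.1], by linarith [hxp.2]⟩
    have a3 : K0 * |x - 0| ≤ K0 * (ρ * δ) := by
      rw [sub_zero]; exact mul_le_mul_of_nonneg_left hx (lip_nonneg H.hK)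
    have a4 := abs_le.1 (a1.trans (a3.trans H.s9))
    have := H.s1
    constructor <;> linarith [a2.1, a2.2, a4.1, a4.2]

end Ctx

open BoundedContinuousFunction in
theorem ball_of_prim {δ C0 C1 : ℝ} (V : ℝ →ᵇ ℝ) (h1 : ∀ x, |V x| ≤ C1 * δ)
    (h2 : ∀ x, |∫ t in (0:ℝ)..x, V t| ≤ C0 * δ^2) :
    (∀ x, deriv (fun x => ∫ t in (0:ℝ)..x, V t) x = V x) ∧
    InBall δ C0 C1 (fun x => ∫ t in (0:ℝ)..x, V t) := by
  have hd : ∀ x, HasDerivAt (fun x => ∫ t in (0:ℝ)..x, V t) (V x) x := fun x =>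
    (V.continuous.integral_hasStrictDerivAt 0 x).hasDerivAt
  refine ⟨fun x => (hd x).deriv, fun x => (hd x).differentiableAt, by simp, h2, fun x => ?_⟩
  rw [(hd x).deriv]; exact h1 x

open BoundedContinuousFunction in
theorem Ctx.exists_fixed {c : ℝ} {g p R : ℝ → ℝ} {B L Cp K0 x0 r0 d ρ δ C0 C1 : ℝ}
    (H : Ctx c g p R B L Cp K0 x0 r0 d ρ δ C0 C1) :
    ∃ S, InBall δ C0 C1 S ∧ Lop g (Gp p R S) = S := by
  let s : Set (ℝ →ᵇ ℝ) := {V | (∀ x, |V x| ≤ C1 * δ) ∧ ∀ x, |∫ t in (0:ℝ)..x, V t| ≤ C0 * δ^2}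
  have hs : IsClosed s := by
    have e : s = (⋂ x : ℝ, {V : ℝ →ᵇ ℝ | |V x| ≤ C1 * δ}) ∩
        ⋂ x : ℝ, {V : ℝ →ᵇ ℝ | |∫ t in (0:ℝ)..x, V t| ≤ C0 * δ^2} := by
      ext V; simp [s]
    rw [e]
    refine (isClosed_iInter fun x => ?_).inter (isClosed_iInter fun x => ?_)
    · exact isClosed_le (continuous_abs.comp (continuous_eval_const (x := x))) continuous_const
    · refine isClosed_le (continuous_abs.comp ?_) continuous_const
      have : LipschitzWith (Real.nnabs x) (fun V : ℝ →ᵇ ℝ => ∫ t in (0:ℝ)..x, V t) := by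
        refine LipschitzWith.of_dist_le_mul fun V W => ?_
        rw [Real.dist_eq, ← intervalIntegral.integral_sub (V.continuous.intervalIntegrable _ _)
          (W.continuous.intervalIntegrable _ _)]
        have h1 := intervalIntegral.norm_integral_le_of_norm_le_const (a := 0) (b := x)
          (f := fun t => V t - W t) (C := dist V W) (fun t _ => by
            rw [← dist_eq_norm]; exact dist_coe_le_dist t)
        rw [Real.norm_eq_abs, sub_zero] at h1
        rw [Real.coe_nnabs]
        linarith
      exact this.continuous
  have step : ∀ V : s, ∃ W : s, ∀ x, (W : ℝ →ᵇ ℝ) x =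
      deriv (Lop g (Gp p R (fun x => ∫ t in (0:ℝ)..x, (V : ℝ →ᵇ ℝ) t))) x := by
    rintro ⟨V, hV1, hV2⟩
    have hb := (ball_of_prim V hV1 hV2).2
    have hT := H.T_ball hb
    have hc : Continuous (deriv (Lop g (Gp p R (fun x => ∫ t in (0:ℝ)..x, V t)))) :=
      cont_of_lip (H.T_reg hb).2
    let W : ℝ →ᵇ ℝ := BoundedContinuousFunction.ofNormedAddCommGroup _ hc (C1 * δ) hT.hb'
    refine ⟨⟨W, fun x => hT.hb' x, fun x => ?_⟩, fun x => rfl⟩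
    have h1 := intervalIntegral.integral_eq_sub_of_hasDerivAt (a := 0) (b := x)
      (fun y _ => (hT.hd y).hasDerivAt) (hc.intervalIntegrable _ _)
    rw [hT.h0, sub_zero] at h1
    have h2 : ∫ t in (0:ℝ)..x, W t = Lop g (Gp p R (fun x => ∫ t in (0:ℝ)..x, V t)) x := h1
    rw [h2]
    exact hT.hb x
  choose f hf using step
  have : CompleteSpace s := hs.completeSpace_coe
  have hδ := H.hδ
  have hC1 := H.hC1
  have hC0 := H.hC0
  have : Nonempty s := ⟨⟨0, fun x => by simp; positivity, fun x => by simp; positivity⟩⟩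
  have hcon : ContractingWith (1/2 : NNReal) f := by
    refine ⟨by rw [← NNReal.coe_lt_coe]; norm_num, LipschitzWith.of_dist_le_mul fun V W => ?_⟩
    have hV := ball_of_prim V.1 V.2.1 V.2.2
    have hW := ball_of_prim W.1 W.2.1 W.2.2
    rw [Subtype.dist_eq, BoundedContinuousFunction.dist_le (by positivity)]
    intro x
    rw [hf, hf, Real.dist_eq]
    have h1 := H.T_contr hV.2 hW.2 (D := dist V W) (fun z => by
      rw [hV.1, hW.1, Subtype.dist_eq, ← Real.dist_eq]
      exact dist_coe_le_dist z) x
    refine h1.trans (le_of_eq ?_)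
    push_cast
    ring
  let V : s := ContractingWith.fixedPoint f hcon
  have hVf : f V = V := hcon.fixedPoint_isFixedPt
  have hV := ball_of_prim V.1 V.2.1 V.2.2
  refine ⟨_, hV.2, ?_⟩
  have hT := H.T_ball hV.2
  have hder : ∀ x, deriv (Lop g (Gp p R (fun x => ∫ t in (0:ℝ)..x, V.1 t))) x = V.1 x := by
    intro x
    rw [← hf, hVf]
  ext x
  have hc : Continuous (deriv (Lop g (Gp p R (fun x => ∫ t in (0:ℝ)..x, V.1 t)))) :=
      cont_of_lip (H.T_reg hV.2).2
  have h1 := intervalIntegral.integral_eq_sub_of_hasDerivAt (a := 0) (b := x)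
      (fun y _ => (hT.hd y).hasDerivAt) (hc.intervalIntegrable _ _)
  rw [hT.h0, sub_zero] at h1
  rw [← h1]
  simp_rw [hder]

theorem small_exists {a e : ℝ} (he : 0 < e) : ∃ D > 0, ∀ δ, 0 < δ → δ < D → a * δ ≤ e := by
  refine ⟨e / (|a| + 1), by positivity, fun δ h0 h => ?_⟩
  rw [lt_div_iff₀ (by positivity)] at h
  have := le_abs_self a
  nlinarith

theorem stmt13 (c kc : ℝ) (hc0 : 0 < c) (hc1 : c < 1) (hkc : 0 < kc)
    (ha : symb kc = c) (hm' : deriv (msymb c) kc ≠ 0)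
    (hroots : ∀ k : ℝ, k ≠ kc → k ≠ -kc → msymb c k ≠ 0)
    (Ψ : ℝ → ℝ → ℝ) (CΨ : ℝ) (hA : AssumptionA Ψ CΨ)
    (hI : ∀ δ : ℝ, 0 < δ → Idelta Ψ δ = 0)
    (R₀ : ℝ → ℝ) (hR₀ : UnperturbedWave c R₀) :
    ∃ (C₀ C₁ : ℝ) (C₂ : NNReal) (δ₀ : ℝ), 0 < C₀ ∧ 0 < C₁ ∧ 0 < C₂ ∧ 0 < δ₀ ∧
      ∀ δ : ℝ, 0 < δ → δ < δ₀ →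
        ∃ S : ℝ → ℝ,
          (IsX S ∧ (∀ x, |S x| ≤ C₀ * δ ^ 2) ∧ (∀ x, |deriv S x| ≤ C₁ * δ) ∧
            LipschitzWith C₂ (deriv S) ∧
            ∃ η : ℝ, ∀ x, Mop c S x = Aop (Aop (Gop Ψ δ R₀ S)) x + η) ∧
          Admissible δ R₀ S ∧
          (∀ S' : ℝ → ℝ,
            (IsX S' ∧ (∀ x, |S' x| ≤ C₀ * δ ^ 2) ∧ (∀ x, |deriv S' x| ≤ C₁ * δ) ∧
              LipschitzWith C₂ (deriv S') ∧
              ∃ η : ℝ, ∀ x, Mop c S' x = Aop (Aop (Gop Ψ δ R₀ S')) x + η) → S' = S) := by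
  obtain ⟨g, B, L, hB, hL, ht, hM⟩ := green_exists c kc hc0 hkc ha hm' hroots R₀ hR₀
  obtain ⟨⟨hd, ⟨C, hC⟩, K, hK⟩, h0, ⟨μ, hμ⟩, x0, r0, d, hx0, hr0, hd0, hp, hn, hder⟩ := hR₀
  obtain ⟨hCp, hA⟩ := hA
  have hL0 := lip_nonneg hL
  have hB0 : 0 ≤ B := (abs_nonneg _).trans (hB 0)
  have hK0 : (0:ℝ) ≤ K := K.2
  set ρ : ℝ := 2 / d with hρ
  have hρ0 : 0 < ρ := by positivity
  set C1 : ℝ := 2 * ρ * L * (CΨ + 1) + 1 with hC1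
  have hC1p : 0 < C1 := by positivity
  set C0 : ℝ := 4 * L * ρ^2 * (CΨ + 1) + 2 * B * (2 * ρ^2 * CΨ * (K * ρ + C1)) + 1 with hC0
  have hC0p : 0 < C0 := by positivity
  obtain ⟨D1, hD1, h1⟩ := small_exists (a := C1) (e := d / 8) (by positivity)
  obtain ⟨D2, hD2, h2⟩ := small_exists (a := C0) (e := r0 / 2) (by positivity)
  obtain ⟨D4, hD4, h4⟩ := small_exists (a := ρ) (e := x0 / 2) (by positivity)
  obtain ⟨D7, hD7, h7⟩ := small_exists (a := 4 * L * ρ^2 * CΨ) (e := 1) (by positivity)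
  obtain ⟨D8, hD8, h8⟩ := small_exists (a := C0) (e := 1) (by positivity)
  obtain ⟨D9, hD9, h9⟩ := small_exists (a := K * ρ) (e := d / 8) (by positivity)
  have hC2 : 0 < (4 + 4 * (CΨ + 1)) / c^2 := by positivity
  refine ⟨C0, C1, ⟨(4 + 4 * (CΨ + 1)) / c^2, hC2.le⟩,
    min 1 (min (r0 / 2) (min D1 (min D2 (min D4 (min D7 (min D8 D9)))))), hC0p, hC1p, hC2, by positivity, ?_⟩
  intro δ hδ hδ0
  simp only [lt_min_iff] at hδ0
  obtain ⟨l1, l3, l, l2, l4, l7, l8, l9⟩ := hδ0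
  obtain ⟨-, hA2, hA3, hA4, hA5⟩ := hA δ hδ
  have hdd : Differentiable ℝ (deriv (Ψ δ)) :=
    ((contDiff_succ_iff_deriv (n := 1)).1 hA2).2.2.differentiable (by norm_num)
  have hsq : C0 * δ^2 ≤ C0 * δ := by
    apply mul_le_mul_of_nonneg_left _ hC0p.le
    nlinarith
  have H : Ctx c g (deriv (Ψ δ)) R₀ B L CΨ K x0 r0 d ρ δ C0 C1 :=
    { hc0 := hc0, hB := hB, hL := hL, ht := ht, hM := hM, hp1 := hA3, hp2 := hA4
      hp3 := fun r s => by
        have h := convex_univ.norm_image_sub_le_of_norm_deriv_le (f := deriv (Ψ δ))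
          (C := CΨ / δ) (fun z _ => hdd z) (fun z _ => hA5 z) (Set.mem_univ s) (Set.mem_univ r)
        simpa using h
      hpI := by
        have h := hI δ hδ
        unfold Idelta at h
        linarith
      hR := hd, hR0 := h0, hRp := hp, hRn := hn, hRd := hder, hK := lip_real hK
      hδ := hδ, hd := hd0, hx0 := hx0, hr0 := hr0, hC0 := hC0p.le, hC1 := hC1p.le
      hρ0 := hρ0, hρ := by rw [hρ]; field_simp
      s1 := h1 δ hδ l, s2 := hsq.trans (h2 δ hδ l2), s3 := l3
      s4 := by linarith [h4 δ hδ l4]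
      s5 := by rw [hC1]; linarith
      s6 := by rw [hC0]; linarith
      s7 := h7 δ hδ l7, s8 := hsq.trans (h8 δ hδ l8)
      s9 := by rw [← mul_assoc]; exact h9 δ hδ l9 }
  obtain ⟨S, hS, hfix⟩ := H.exists_fixed
  have hreg := H.T_reg hS
  have heq := H.T_eq hS
  have hlim := Lop_lim H.hB H.hL H.ht (supp_integrable (H.G_meas hS.hd.continuous) (H.G_bd S) (H.G_supp hS))
  rw [hfix] at hreg heq hlim
  have hlip : LipschitzWith ⟨(4 + 4 * (CΨ + 1)) / c^2, hC2.le⟩ (deriv S) :=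
    LipschitzWith.of_dist_le_mul (fun x y => by
      rw [Real.dist_eq, Real.dist_eq]; exact hreg.2 x y)
  have hW : IsW2inf S := ⟨hS.hd, ⟨C0 * δ^2 + C1 * δ, fun x =>
    ⟨(hS.hb x).trans (by have : 0 < C1 * δ := by positivity
                         linarith), (hS.hb' x).trans (by have : 0 < C0 * δ^2 := by positivity
                                                         linarith)⟩⟩, _, hlip⟩
  refine ⟨S, ⟨⟨hW, hS.h0, _, hlim⟩, hS.hb, hS.hb', hlip, heq⟩, H.admissible hS hW, ?_⟩
  rintro S' ⟨⟨hW', hS0', l', hl'⟩, hb, hb', -, η, hη⟩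
  have hS' : InBall δ C0 C1 S' := ⟨hW'.1, hS0', hb, hb'⟩
  exact H.fixed_unique hS hS' hfix (H.fixed_of_sol hc1 hkc ha hm' hroots hS' hl' hη)
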